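/- There is an absolute constant C > 0 such that for every even positive integer n that equals the least common multiple of all of its shifted-prime divisors (i.e., n = min⟨n⟩), the natural density δ(⟨n⟩) of the equivalence class ⟨n⟩ satisfies δ(⟨n⟩) ≥ 1 / n^{C·τ(n)}, where τ(n) is the number of divisors of n. -/

import Mathlib

open Filter Real

/-- The set of shifted-prime divisors of `n`: divisors `d` of `n` with `d + 1` prime. -/
def spd (n : ℕ) : Finset ℕ := n.divisors.filter (fun d => Nat.Prime (d + 1))


/-- elementary symmetric sums over a finite set -/
noncomputable def eSym (P : Finset ℕ) (w : ℕ → ℝ) (k : ℕ) : ℝ :=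
  ∑ S ∈ P.powersetCard k, ∏ p ∈ S, w p

noncomputable def bSum (P : Finset ℕ) (w : ℕ → ℝ) (k : ℕ) : ℝ :=
  ∑ j ∈ Finset.range (k + 1), (-1) ^ j * eSym P w j

lemma eSym_zero (P : Finset ℕ) (w : ℕ → ℝ) : eSym P w 0 = 1 := by simp [eSym]

lemma eSym_insert {P : Finset ℕ} {q : ℕ} (hq : q ∉ P) (w : ℕ → ℝ) (k : ℕ) :
    eSym (insert q P) w (k + 1) = eSym P w (k + 1) + w q * eSym P w k := by
  unfold eSym
  rw [Finset.powersetCard_succ_insert hq, Finset.sum_union, Finset.sum_image, Finset.mul_sum]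
  · congr 1
    apply Finset.sum_congr rfl
    intro S hS
    rw [Finset.prod_insert]
    intro h
    exact hq ((Finset.mem_powersetCard.1 hS).1 h)
  · intro S hS T hT h
    have h1 : q ∉ S := fun h => hq ((Finset.mem_powersetCard.1 hS).1 h)
    have h2 : q ∉ T := fun h => hq ((Finset.mem_powersetCard.1 hT).1 h)
    rw [← Finset.erase_insert h1, ← Finset.erase_insert h2, h]
  · rw [Finset.disjoint_left]
    intro S hS hS'
    obtain ⟨T, hT, rfl⟩ := Finset.mem_image.1 hS'
    exact hq ((Finset.mem_powersetCard.1 hS).1 (Finset.mem_insert_self _ _))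

lemma bSum_insert {P : Finset ℕ} {q : ℕ} (hq : q ∉ P) (w : ℕ → ℝ) (k : ℕ) :
    bSum (insert q P) w (k + 1) = bSum P w (k + 1) - w q * bSum P w k := by
  unfold bSum
  rw [Finset.sum_range_succ' _ (k+1), Finset.sum_range_succ' (fun j => (-1) ^ j * eSym P w j) (k+1)]
  simp only [eSym_zero, eSym_insert hq]
  rw [Finset.mul_sum]
  have : ∀ a b c : ℝ, a = b - c → a + (-1)^0 * 1 = b + (-1)^0*1 - c := by intros; linarith
  apply this
  rw [← Finset.sum_sub_distrib]
  apply Finset.sum_congr rfl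
  intros; ring

lemma bonferroni (P : Finset ℕ) (w : ℕ → ℝ) (h0 : ∀ p ∈ P, 0 ≤ w p) (h1 : ∀ p ∈ P, w p ≤ 1) (k : ℕ) :
    0 ≤ (-1 : ℝ) ^ k * (bSum P w k - ∏ p ∈ P, (1 - w p)) := by
  induction P using Finset.induction_on generalizing k with
  | empty =>
    have : bSum ∅ w k = 1 := by
      unfold bSum
      rw [Finset.sum_eq_single 0]
      · simp [eSym]
      · intro b _ hb
        obtain ⟨c, rfl⟩ := Nat.exists_eq_succ_of_ne_zero hb
        have : Finset.powersetCard (c+1) (∅ : Finset ℕ) = ∅ := Finset.powersetCard_eq_empty.2 (by simp)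
        simp [eSym, this]
      · simp
    simp [this]
  | insert q P hq ih =>
    have ih' := ih (fun p hp => h0 p (Finset.mem_insert_of_mem hp)) (fun p hp => h1 p (Finset.mem_insert_of_mem hp))
    cases k with
    | zero =>
      simp only [bSum, zero_add, Finset.sum_range_one, eSym_zero, pow_zero, one_mul, mul_one]
      have : ∏ p ∈ insert q P, (1 - w p) ≤ 1 := by
        apply Finset.prod_le_one
        · intro p hp; linarith [h1 p hp]
        · intro p hp; linarith [h0 p hp]
      linarith
    | succ k =>
      rw [bSum_insert hq, Finset.prod_insert hq]
      have a := ih' (k+1)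
      have b := mul_nonneg (h0 q (Finset.mem_insert_self _ _)) (ih' k)
      have : ∀ Q : ℝ, (-1 : ℝ) ^ (k+1) * (bSum P w (k+1) - w q * bSum P w k - (1 - w q) * Q) =
         (-1 : ℝ) ^ (k+1) * (bSum P w (k+1) - Q) + w q * ((-1) ^ k * (bSum P w k - Q)) := by
        intro Q; ring
      rw [this]; linarith

lemma eSym_le (P : Finset ℕ) (w : ℕ → ℝ) (h0 : ∀ p ∈ P, 0 ≤ w p) (k : ℕ) (hk : 4 * ∑ p ∈ P, w p ≤ k) :
    eSym P w k ≤ exp (- ∑ p ∈ P, w p) := by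
  have h1 : exp 1 ^ k * eSym P w k ≤ ∏ p ∈ P, (1 + exp 1 * w p) := by
    rw [Finset.prod_one_add, eSym, Finset.mul_sum]
    calc ∑ S ∈ P.powersetCard k, exp 1 ^ k * ∏ p ∈ S, w p = ∑ S ∈ P.powersetCard k, ∏ p ∈ S, (exp 1 * w p) := by
          apply Finset.sum_congr rfl
          intro S hS
          rw [Finset.prod_mul_distrib, Finset.prod_const, (Finset.mem_powersetCard.1 hS).2]
      _ ≤ _ := by
          apply Finset.sum_le_sum_of_subset_of_nonneg
          · intro S hS; exact Finset.mem_powerset.2 (Finset.mem_powersetCard.1 hS).1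
          · intro S hS _
            apply Finset.prod_nonneg
            intro p hp
            exact mul_nonneg (exp_pos _).le (h0 p (Finset.mem_powerset.1 hS hp))
  have h2 : ∏ p ∈ P, (1 + exp 1 * w p) ≤ exp (exp 1 * ∑ p ∈ P, w p) := by
    rw [Finset.mul_sum, exp_sum]
    apply Finset.prod_le_prod
    · intro p hp; have := mul_nonneg (exp_pos 1).le (h0 p hp); linarith
    · intro p hp; rw [add_comm]; exact add_one_le_exp _
  have h3 : exp 1 ^ k = exp (k : ℝ) := by rw [← exp_nat_mul]; simp
  have hs : 0 ≤ ∑ p ∈ P, w p := Finset.sum_nonneg h0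
  have he : exp 1 < 3 := by have := exp_one_lt_d9; linarith
  have h4 : exp (exp 1 * ∑ p ∈ P, w p) ≤ exp (k : ℝ) * exp (- ∑ p ∈ P, w p) := by
    rw [← exp_add]; apply exp_le_exp.2; nlinarith
  have h5 := (h1.trans h2).trans h4
  rw [h3] at h5
  exact le_of_mul_le_mul_left h5 (exp_pos _)

lemma sum_pow_le (x : ℝ) (hx : 0 ≤ x) (k : ℕ) : ∑ j ∈ Finset.range (k+1), x ^ j ≤ (x + 1) ^ k := by
  rw [add_pow]
  apply Finset.sum_le_sum
  intro j hj
  have : (1:ℝ) ≤ (k.choose j : ℝ) := by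
    have := Nat.choose_pos (Nat.lt_succ_iff.1 (Finset.mem_range.1 hj))
    exact_mod_cast this
  simp only [one_pow, mul_one]
  have h := pow_nonneg hx j
  nlinarith

lemma periodic_sum (f : ℕ → ℝ) (m : ℕ) (hm : 0 < m) (hf : ∀ a, f (a + m) = f a) (h0 : ∀ a, 0 ≤ f a)
    (h1 : ∀ a, f a ≤ 1) (N : ℕ) :
    |∑ a ∈ Finset.range N, f a - N * ((∑ a ∈ Finset.range m, f a) / m)| ≤ m := by
  have hq : ∀ q r, ∑ a ∈ Finset.range (m * q + r), f a = q * (∑ a ∈ Finset.range m, f a) + ∑ a ∈ Finset.range r, f a := by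
    have hf' : ∀ q a, f (m * q + a) = f a := by
      intro q; induction q with
      | zero => intro a; simp
      | succ q ih => intro a; rw [← ih a, ← hf (m*q+a)]; congr 1; ring
    intro q; induction q with
    | zero => intro r; simp
    | succ q ih =>
      intro r
      rw [Finset.sum_range_add, show m * (q+1) = m * q + m by ring, ih m]
      simp only [show ∀ x, m * q + m + x = m * (q+1) + x by intros; ring, hf']
      push_cast; ring
  have hN := Nat.div_add_mod N m
  set q := N / m
  set r := N % m
  have hr : r < m := Nat.mod_lt _ hm
  have hrm : ∑ a ∈ Finset.range r, f a ≤ ∑ a ∈ Finset.range m, f a :=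
    Finset.sum_le_sum_of_subset_of_nonneg (Finset.range_mono hr.le) (fun i _ _ => h0 i)
  have hmm : ∑ a ∈ Finset.range m, f a ≤ m := by
    calc _ ≤ ∑ a ∈ Finset.range m, (1:ℝ) := Finset.sum_le_sum (fun i _ => h1 i)
      _ = m := by simp
  have hr0 : 0 ≤ ∑ a ∈ Finset.range r, f a := Finset.sum_nonneg (fun i _ => h0 i)
  rw [← hN, hq q r]
  set A := ∑ a ∈ Finset.range m, f a
  set R := ∑ a ∈ Finset.range r, f a
  have hmpos : (0:ℝ) < m := by exact_mod_cast hm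
  have e : (q:ℝ) * A + R - ((m * q + r : ℕ):ℝ) * (A / m) = R - r * (A / m) := by
    push_cast; field_simp; ring
  rw [e, abs_le]
  have hrr : (r:ℝ) * (A / m) ≤ A := by
    rw [mul_div_assoc', div_le_iff₀ hmpos]
    have : (r:ℝ) ≤ m := by exact_mod_cast hr.le
    nlinarith
  have hA : 0 ≤ A := hr0.trans hrm
  have : 0 ≤ (r:ℝ) * (A / m) := by positivity
  constructor <;> linarith

lemma crt_sum (f g : ℕ → ℝ) (m n : ℕ) (hm : 0 < m) (hn : 0 < n) (hmn : Nat.Coprime m n)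
    (hf : ∀ a, f (a % m) = f a) (hg : ∀ a, g (a % n) = g a) :
    ∑ a ∈ Finset.range (m * n), f a * g a = (∑ a ∈ Finset.range m, f a) * ∑ a ∈ Finset.range n, g a := by
  rw [Finset.sum_mul_sum, ← Finset.sum_product']
  apply Finset.sum_bij' (i := fun a _ => (a % m, a % n)) (j := fun x _ => (Nat.chineseRemainder hmn x.1 x.2 : ℕ))
  · intro a _
    simp [Nat.mod_lt _ hm, Nat.mod_lt _ hn]
  · intro x _
    simp only [Finset.mem_range]
    exact Nat.chineseRemainder_lt_mul hmn _ _ hm.ne' hn.ne'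
  · intro a ha
    have h := (Nat.chineseRemainder hmn (a % m) (a % n)).2
    have : (Nat.chineseRemainder hmn (a % m) (a % n) : ℕ) ≡ a [MOD m * n] := by
      rw [← Nat.modEq_and_modEq_iff_modEq_mul hmn]
      exact ⟨h.1.trans (Nat.mod_modEq _ _), h.2.trans (Nat.mod_modEq _ _)⟩
    exact Nat.ModEq.eq_of_lt_of_lt this (Nat.chineseRemainder_lt_mul hmn _ _ hm.ne' hn.ne') (Finset.mem_range.1 ha)
  · intro x hx
    have h := (Nat.chineseRemainder hmn x.1 x.2).2
    simp only [Finset.mem_product, Finset.mem_range] at hx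
    ext
    · exact Eq.trans h.1 (Nat.mod_eq_of_lt hx.1)
    · exact Eq.trans h.2 (Nat.mod_eq_of_lt hx.2)
  · intro a _
    simp [hf, hg]

lemma prod_mean (S : Finset ℕ) (hS : ∀ p ∈ S, p.Prime) (w : ℕ → ℕ → ℝ)
    (hw : ∀ p a, w p (a % p) = w p a) :
    (∀ a, ∏ p ∈ S, w p (a % (∏ p ∈ S, p)) = ∏ p ∈ S, w p a) ∧
    ∑ a ∈ Finset.range (∏ p ∈ S, p), ∏ p ∈ S, w p a = ∏ p ∈ S, ∑ a ∈ Finset.range p, w p a := by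
  induction S using Finset.induction_on with
  | empty => simp
  | insert q S hq ih =>
    have ih := ih (fun p hp => hS p (Finset.mem_insert_of_mem hp))
    constructor
    · intro a
      apply Finset.prod_congr rfl
      intro p hp
      rw [← hw p (a % _), Nat.mod_mod_of_dvd _ (Finset.dvd_prod_of_mem _ hp), hw]
    · simp only [Finset.prod_insert hq]
      rw [crt_sum (w q) (fun a => ∏ p ∈ S, w p a) q (∏ p ∈ S, p) (hS q (Finset.mem_insert_self _ _)).pos
        (Finset.prod_pos fun p hp => (hS p (Finset.mem_insert_of_mem hp)).pos) ?_ (hw q) ih.1, ih.2]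
      apply Nat.Coprime.prod_right
      intro p hp
      rw [Nat.coprime_primes (hS q (Finset.mem_insert_self _ _)) (hS p (Finset.mem_insert_of_mem hp))]
      rintro rfl; exact hq hp

/-- Weighted pure sieve of Brun. -/
lemma brun (P : Finset ℕ) (hP : ∀ p ∈ P, p.Prime) (w : ℕ → ℕ → ℝ)
    (hw : ∀ p a, w p (a % p) = w p a) (h0 : ∀ p a, 0 ≤ w p a) (h1 : ∀ p ∈ P, ∀ a, w p a ≤ 1)
    (z k N : ℕ) (hz : ∀ p ∈ P, p ≤ z) (hk : Even k) (ρ : ℕ → ℝ)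
    (hρ : ∀ p ∈ P, ρ p = (∑ a ∈ Finset.range p, w p a) / p)
    (hkL : 4 * ∑ p ∈ P, ρ p ≤ k) (hN : exp (∑ p ∈ P, ρ p) * (z:ℝ) ^ (2 * k) ≤ N) :
    ∑ a ∈ Finset.range N, ∏ p ∈ P, (1 - w p a) ≤ 3 * N * exp (- ∑ p ∈ P, ρ p) := by
  have hρ0 : ∀ p ∈ P, 0 ≤ ρ p := by
    intro p hp; rw [hρ p hp]
    exact div_nonneg (Finset.sum_nonneg fun a _ => h0 p a) (Nat.cast_nonneg _)
  have hρ1 : ∀ p ∈ P, ρ p ≤ 1 := by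
    intro p hp; rw [hρ p hp]
    have : (0:ℝ) < p := by exact_mod_cast (hP p hp).pos
    rw [div_le_one this]
    calc _ ≤ ∑ a ∈ Finset.range p, (1:ℝ) := Finset.sum_le_sum (fun i _ => h1 p hp i)
      _ = p := by simp
  set L := ∑ p ∈ P, ρ p with hL
  have s1 : ∑ a ∈ Finset.range N, ∏ p ∈ P, (1 - w p a) ≤ ∑ a ∈ Finset.range N, bSum P (fun p => w p a) k := by
    apply Finset.sum_le_sum
    intro a _
    have := bonferroni P (fun p => w p a) (fun p _ => h0 p a) (fun p hp => h1 p hp a) k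
    rw [hk.neg_one_pow] at this
    linarith
  have s2 : ∀ j, |∑ a ∈ Finset.range N, eSym P (fun p => w p a) j - N * eSym P ρ j| ≤ ((z:ℝ) * z - z) ^ j := by
    intro j
    unfold eSym
    rw [Finset.sum_comm, Finset.mul_sum, ← Finset.sum_sub_distrib]
    have hcard : (P.card : ℝ) ≤ z - 1 ∨ P = ∅ := by
      by_cases hPe : P = ∅
      · right; exact hPe
      · left
        have h : P ⊆ Finset.Icc 2 z := by
          intro p hp; rw [Finset.mem_Icc]; exact ⟨(hP p hp).two_le, hz p hp⟩
        have h2 := Finset.card_le_card h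
        obtain ⟨p, hp⟩ := Finset.nonempty_iff_ne_empty.2 hPe
        have h3 := (hP p hp).two_le.trans (hz p hp)
        simp only [Nat.card_Icc] at h2
        have : P.card + 1 ≤ z := by omega
        have : ((P.card + 1 : ℕ):ℝ) ≤ z := by exact_mod_cast this
        push_cast at this; linarith
    calc _ ≤ ∑ S ∈ P.powersetCard j, (z:ℝ) ^ j := by
          refine (Finset.abs_sum_le_sum_abs _ _).trans (Finset.sum_le_sum ?_)
          intro S hS
          have hS' := Finset.mem_powersetCard.1 hS
          have hSp : ∀ p ∈ S, p.Prime := fun p hp => hP p (hS'.1 hp)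
          obtain ⟨pm1, pm2⟩ := prod_mean S hSp w hw
          have e : ∏ p ∈ S, ρ p = (∑ a ∈ Finset.range (∏ p ∈ S, p), ∏ p ∈ S, w p a) / ((∏ p ∈ S, p : ℕ) : ℝ) := by
            rw [pm2, Nat.cast_prod, ← Finset.prod_div_distrib]
            exact Finset.prod_congr rfl (fun p hp => hρ p (hS'.1 hp))
          rw [e]
          refine (periodic_sum (fun a => ∏ p ∈ S, w p a) _ (Finset.prod_pos fun p hp => (hSp p hp).pos) ?_ ?_ ?_ N).trans ?_
          · intro a; rw [← pm1, Nat.add_mod_right, pm1]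
          · intro a; exact Finset.prod_nonneg fun p _ => h0 p a
          · intro a; exact Finset.prod_le_one (fun p _ => h0 p a) (fun p hp => h1 p (hS'.1 hp) a)
          · rw [Nat.cast_prod, ← hS'.2, ← Finset.prod_const]
            apply Finset.prod_le_prod
            · intros; positivity
            · intro p hp; exact_mod_cast hz p (hS'.1 hp)
      _ = (P.card.choose j : ℝ) * (z:ℝ)^j := by simp
      _ ≤ (P.card : ℝ) ^ j * (z:ℝ) ^ j := by
          gcongr; exact_mod_cast Nat.choose_le_pow _ _
      _ ≤ _ := by
          rcases hcard with h | h
          · rw [← mul_pow]; gcongr; nlinarith [Nat.cast_nonneg (α := ℝ) z]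
          · subst h
            rcases Nat.eq_zero_or_pos j with rfl | hj
            · simp
            · simp only [Finset.card_empty, Nat.cast_zero, zero_pow hj.ne', zero_mul]
              apply pow_nonneg
              rcases Nat.eq_zero_or_pos z with rfl | h
              · simp
              · have : (1:ℝ) ≤ z := by exact_mod_cast h
                nlinarith
  have hzz : (0:ℝ) ≤ (z:ℝ) * z - z := by
    rcases Nat.eq_zero_or_pos z with rfl | h
    · simp
    · have : (1:ℝ) ≤ z := by exact_mod_cast h
      nlinarith
  by_cases hz0 : z = 0
  · subst hz0
    have : P = ∅ := by
      by_contra h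
      obtain ⟨p, hp⟩ := Finset.nonempty_iff_ne_empty.2 h
      have := (hP p hp).two_le.trans (hz p hp)
      omega
    subst this
    simp [hL]
    have : (0:ℝ) ≤ N := Nat.cast_nonneg _
    linarith
  have hz1 : (1:ℝ) ≤ z := by exact_mod_cast Nat.pos_of_ne_zero hz0
  have s3 : ∑ a ∈ Finset.range N, bSum P (fun p => w p a) k ≤ N * bSum P ρ k + (z:ℝ) ^ (2 * k) := by
    have e : ∑ a ∈ Finset.range N, bSum P (fun p => w p a) k - N * bSum P ρ k
       = ∑ j ∈ Finset.range (k+1), (-1)^j * (∑ a ∈ Finset.range N, eSym P (fun p => w p a) j - N * eSym P ρ j) := by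
      unfold bSum
      rw [Finset.sum_comm, Finset.mul_sum, ← Finset.sum_sub_distrib]
      apply Finset.sum_congr rfl
      intro j _
      rw [← Finset.mul_sum]; ring
    have e2 : ∑ j ∈ Finset.range (k+1), (-1)^j * (∑ a ∈ Finset.range N, eSym P (fun p => w p a) j - N * eSym P ρ j)
      ≤ ∑ j ∈ Finset.range (k+1), ((z:ℝ) * z - z) ^ j := by
      apply Finset.sum_le_sum
      intro j _
      refine (le_abs_self _).trans ?_
      rw [abs_mul, abs_pow, abs_neg, abs_one, one_pow, one_mul]
      exact s2 j
    have e3 := sum_pow_le _ hzz k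
    have e4 : ((z:ℝ) * z - z + 1) ^ k ≤ (z:ℝ) ^ (2*k) := by
      rw [pow_mul]; gcongr; nlinarith
    linarith
  have s4 : bSum P ρ k ≤ ∏ p ∈ P, (1 - ρ p) + eSym P ρ (k+1) := by
    have := bonferroni P ρ hρ0 hρ1 (k+1)
    rw [hk.add_one.neg_one_pow] at this
    have e : bSum P ρ (k+1) = bSum P ρ k - eSym P ρ (k+1) := by
      unfold bSum
      rw [Finset.sum_range_succ _ (k+1), hk.add_one.neg_one_pow]; ring
    linarith
  have s5 : ∏ p ∈ P, (1 - ρ p) ≤ exp (-L) := by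
    rw [hL, ← Finset.sum_neg_distrib, exp_sum]
    apply Finset.prod_le_prod
    · intro p hp; linarith [hρ1 p hp]
    · intro p hp; have := add_one_le_exp (-ρ p); linarith
  have s6 : eSym P ρ (k+1) ≤ exp (-L) := by
    apply eSym_le P ρ hρ0; push_cast; linarith
  have s7 : (z:ℝ)^(2*k) ≤ N * exp (-L) := by
    rw [exp_neg, ← div_eq_mul_inv, le_div_iff₀ (exp_pos _)]; linarith
  have hN0 : (0:ℝ) ≤ N := Nat.cast_nonneg _
  nlinarith

noncomputable def Hp (N : ℕ) : ℝ := ∑ p ∈ N.primesBelow, (1 : ℝ) / p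

lemma tele_sum (w N : ℕ) (hw : 2 ≤ w) (hN : w ≤ N) :
    ∑ m ∈ Finset.Ico w N, ((1:ℝ) / ((m:ℝ) - 1) - 1 / m) ≤ 1 / ((w:ℝ) - 1) := by
  have : ∑ m ∈ Finset.Ico w N, ((1:ℝ) / ((m:ℝ) - 1) - 1 / m) = 1 / ((w:ℝ)-1) - 1 / ((N:ℝ) - 1) := by
    induction N, hN using Nat.le_induction with
    | base => simp
    | succ n hn ih =>
      rw [Finset.sum_Ico_succ_top hn, ih]; push_cast; ring
  rw [this]
  have : (2:ℝ) ≤ N := by exact_mod_cast hw.trans hN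
  have : 0 ≤ 1 / ((N:ℝ) - 1) := by apply div_nonneg <;> linarith
  linarith

lemma tele_nonneg (m : ℕ) (hm : 2 ≤ m) : 0 ≤ ((1:ℝ) / ((m:ℝ) - 1) - 1 / m) := by
  have : (2:ℝ) ≤ m := by exact_mod_cast hm
  have : 1 / (m:ℝ) ≤ 1 / ((m:ℝ) - 1) := by
    apply one_div_le_one_div_of_le <;> linarith
  linarith

lemma prod_primes_inv (N : ℕ) :
    ∏ p ∈ N.primesBelow, (1 - (1:ℝ) / p)⁻¹ ≤ exp (Hp N + 1) := by
  have h1 : ∑ p ∈ N.primesBelow, ((1:ℝ) / ((p:ℝ) - 1) - 1 / p) ≤ 1 := by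
    by_cases hN : 2 ≤ N
    · have := tele_sum 2 N le_rfl hN
      have e1 : (1:ℝ) / (((2:ℕ):ℝ) - 1) = 1 := by norm_num
      rw [e1] at this
      refine le_trans ?_ this
      apply Finset.sum_le_sum_of_subset_of_nonneg
      · intro p hp
        rw [Nat.mem_primesBelow] at hp
        exact Finset.mem_Ico.2 ⟨hp.2.two_le, hp.1⟩
      · intro m hm _
        exact tele_nonneg m (Finset.mem_Ico.1 hm).1
    · have : N.primesBelow = ∅ := by
        apply Finset.eq_empty_of_forall_notMem
        intro p hp
        rw [Nat.mem_primesBelow] at hp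
        have := hp.2.two_le
        omega
      simp [this]
  calc ∏ p ∈ N.primesBelow, (1 - (1:ℝ) / p)⁻¹ ≤ ∏ p ∈ N.primesBelow, exp (1 / p + ((1:ℝ) / ((p:ℝ) - 1) - 1 / p)) := by
        apply Finset.prod_le_prod
        · intro p hp
          rw [Nat.mem_primesBelow] at hp
          have : (2:ℝ) ≤ p := by exact_mod_cast hp.2.two_le
          rw [inv_nonneg, sub_nonneg, div_le_one] <;> linarith
        · intro p hp
          rw [Nat.mem_primesBelow] at hp
          have : (2:ℝ) ≤ p := by exact_mod_cast hp.2.two_le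
          have e : (1 - (1:ℝ) / p)⁻¹ = (1:ℝ) / ((p:ℝ) - 1) + 1 := by
            have : (p:ℝ) - 1 ≠ 0 := by linarith
            have : (p:ℝ) ≠ 0 := by linarith
            field_simp; ring
          rw [e]
          refine (add_one_le_exp _).trans (le_of_eq ?_)
          congr 1; ring
    _ = exp (∑ p ∈ N.primesBelow, (1 / (p:ℝ) + ((1:ℝ) / ((p:ℝ) - 1) - 1 / p))) := by rw [exp_sum]
    _ ≤ _ := by
        apply exp_le_exp.2
        rw [Finset.sum_add_distrib]
        unfold Hp; linarith

lemma prod_primes_lower (N : ℕ) :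
    exp (-(Hp N + 1)) ≤ ∏ p ∈ N.primesBelow, (1 - (1:ℝ) / p) := by
  have h := prod_primes_inv N
  rw [Finset.prod_inv_distrib] at h
  have hpos : 0 < ∏ p ∈ N.primesBelow, (1 - (1:ℝ) / p) := by
    apply Finset.prod_pos
    intro p hp
    rw [Nat.mem_primesBelow] at hp
    have : (2:ℝ) ≤ p := by exact_mod_cast hp.2.two_le
    rw [sub_pos, div_lt_one] <;> linarith
  rw [exp_neg]
  exact inv_le_of_inv_le₀ hpos h

lemma Hp_lower (N : ℕ) (hN : 1 ≤ N) : log N ≤ exp (Hp N + 1) := by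
  let f : ℕ →* ℝ := { toFun := fun m => (m:ℝ)⁻¹, map_one' := by simp, map_mul' := by intro a b; push_cast; rw [mul_inv] }
  have hf : ∀ {p : ℕ}, p.Prime → ‖f p‖ < 1 := by
    intro p hp
    have : (1:ℝ) < p := by exact_mod_cast hp.one_lt
    simp only [f, MonoidHom.coe_mk, OneHom.coe_mk, norm_inv, RCLike.norm_natCast]
    exact inv_lt_one_of_one_lt₀ this
  obtain ⟨h1, h2⟩ := EulerProduct.summable_and_hasSum_smoothNumbers_prod_primesBelow_geometric hf N
  have h3 : ∑ m ∈ Finset.Icc 1 (N-1), (m:ℝ)⁻¹ ≤ ∏ p ∈ N.primesBelow, (1 - f p)⁻¹ := by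
    have hmem : ∀ m ∈ Finset.Icc 1 (N-1), m ∈ N.smoothNumbers := by
      intro m hm
      rw [Finset.mem_Icc] at hm
      exact Nat.mem_smoothNumbers_of_lt (by omega) (by omega)
    rw [← Finset.sum_attach]
    let e : {x // x ∈ Finset.Icc 1 (N-1)} ↪ N.smoothNumbers := ⟨fun x => ⟨x.1, hmem x.1 x.2⟩, by
      intro x y h; exact Subtype.ext (congrArg (fun t : N.smoothNumbers => (t : ℕ)) h)⟩
    have := sum_le_hasSum ((Finset.Icc 1 (N-1)).attach.map e) (fun m _ => by simp [f]) h2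
    rw [Finset.sum_map] at this
    exact this
  have h4 := log_add_one_le_harmonic (N-1)
  rw [Nat.sub_add_cancel hN] at h4
  have h5 : ((harmonic (N-1) : ℚ) : ℝ) = ∑ m ∈ Finset.Icc 1 (N-1), (m:ℝ)⁻¹ := by
    rw [harmonic_eq_sum_Icc]; push_cast; rfl
  rw [h5] at h4
  have h6 := prod_primes_inv N
  simp only [f, MonoidHom.coe_mk, OneHom.coe_mk] at h3
  simp only [one_div] at h6
  exact h4.trans (h3.trans h6)

lemma dyadic_primes (t : ℕ) (ht : 1 ≤ t) :
    ∑ p ∈ (Finset.Ico (2^t) (2^(t+1))).filter Nat.Prime, (1:ℝ) / p ≤ 4 / t := by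
  set Q := (Finset.Ico (2^t) (2^(t+1))).filter Nat.Prime
  have h1 : (2^t) ^ Q.card ≤ 4 ^ (2^(t+1)) := by
    calc (2^t) ^ Q.card = ∏ p ∈ Q, 2^t := by simp
      _ ≤ ∏ p ∈ Q, p := by
        apply Finset.prod_le_prod'
        intro p hp
        exact (Finset.mem_Ico.1 (Finset.mem_filter.1 hp).1).1
      _ ≤ primorial (2^(t+1)) := by
        unfold primorial
        apply Finset.prod_le_prod_of_subset_of_one_le'
        · intro p hp
          have := Finset.mem_filter.1 hp
          have h := Finset.mem_Ico.1 this.1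
          exact Finset.mem_filter.2 ⟨Finset.mem_range.2 (by omega), this.2⟩
        · intro p hp _
          exact (Finset.mem_filter.1 hp).2.one_le
      _ ≤ _ := primorial_le_four_pow _
  have h2 : t * Q.card ≤ 2 * 2^(t+1) := by
    rw [← pow_mul, show (4:ℕ) = 2^2 by norm_num, ← pow_mul] at h1
    exact (Nat.pow_le_pow_iff_right (by norm_num)).1 h1
  have h2' : (t:ℝ) * Q.card ≤ 4 * 2^t := by
    have : ((t * Q.card : ℕ):ℝ) ≤ ((2 * 2^(t+1) : ℕ):ℝ) := by exact_mod_cast h2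
    push_cast at this
    rw [pow_succ] at this; linarith
  have htp : (0:ℝ) < t := by exact_mod_cast ht
  calc _ ≤ ∑ p ∈ Q, (1:ℝ) / 2^t := by
        apply Finset.sum_le_sum
        intro p hp
        have := (Finset.mem_Ico.1 (Finset.mem_filter.1 hp).1).1
        have : (2:ℝ)^t ≤ p := by exact_mod_cast this
        exact one_div_le_one_div_of_le (by positivity) this
    _ = Q.card / 2^t := by simp [div_eq_mul_inv]
    _ ≤ _ := by
        rw [div_le_div_iff₀ (by positivity) htp]; linarith

lemma Hp_upper (T : ℕ) (hT : 1 ≤ T) : Hp (2^T) ≤ 4 * (1 + log T) := by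
  have h : ∀ T, 1 ≤ T → Hp (2^T) ≤ 4 * ∑ t ∈ Finset.Icc (1:ℕ) (T-1), (t:ℝ)⁻¹ := by
    intro T hT
    induction T, hT using Nat.le_induction with
    | base =>
      have : (2^1).primesBelow = ∅ := by decide
      simp [Hp, this]
    | succ n hn ih =>
      have e : (2^(n+1)).primesBelow = (2^n).primesBelow ∪ (Finset.Ico (2^n) (2^(n+1))).filter Nat.Prime := by
        ext p
        simp only [Nat.mem_primesBelow, Finset.mem_union, Finset.mem_filter, Finset.mem_Ico]
        have : 2^n ≤ 2^(n+1) := Nat.pow_le_pow_right (by norm_num) (by omega)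
        constructor
        · rintro ⟨a, b⟩
          by_cases h : p < 2^n
          · left; exact ⟨h, b⟩
          · right; exact ⟨⟨by omega, a⟩, b⟩
        · rintro (⟨a, b⟩ | ⟨⟨a, b⟩, c⟩)
          · exact ⟨by omega, b⟩
          · exact ⟨b, c⟩
      have h2 : Hp (2^(n+1)) ≤ Hp (2^n) + 4 / n := by
        unfold Hp
        rw [e, Finset.sum_union]
        · have := dyadic_primes n hn; linarith
        · rw [Finset.disjoint_left]
          intro p hp hp'
          rw [Nat.mem_primesBelow] at hp
          have := (Finset.mem_Ico.1 (Finset.mem_filter.1 hp').1).1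
          omega
      have h3 : Finset.Icc 1 (n+1-1) = insert n (Finset.Icc 1 (n-1)) := by
        ext x; simp; omega
      rw [h3, Finset.sum_insert (by simp; omega)]
      rw [mul_add]
      have : 4 / (n:ℝ) = 4 * (n:ℝ)⁻¹ := by ring
      linarith
  have h5 : ((harmonic (T-1) : ℚ) : ℝ) = ∑ m ∈ Finset.Icc 1 (T-1), (m:ℝ)⁻¹ := by
    rw [harmonic_eq_sum_Icc]; push_cast; rfl
  have h6 := harmonic_le_one_add_log (T-1)
  have h7 : log ((T-1 : ℕ):ℝ) ≤ log T := by
    rcases Nat.eq_or_lt_of_le hT with h | h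
    · subst h; simp
    · apply log_le_log
      · have : 0 < T - 1 := by omega
        exact_mod_cast this
      · exact_mod_cast Nat.sub_le _ _
  have := h T hT
  rw [← h5] at this
  linarith

def om (P : Finset ℕ) (k : ℕ) : ℕ := (P.filter (· ∣ k)).card

noncomputable def hwt (P : Finset ℕ) (b : ℕ) : ℝ := ∏ p ∈ P, (1 - if p ∣ b then (1/2:ℝ) else 0)

noncomputable def fwt (P : Finset ℕ) (d a : ℕ) : ℝ :=
  ∏ p ∈ P, (1 - ((if p ∣ d * a + 1 then (1:ℝ) else 0) + if p ∣ a then (1/2:ℝ) else 0))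

lemma hwt_eq (P : Finset ℕ) (b : ℕ) : hwt P b = (1/2:ℝ) ^ om P b := by
  unfold hwt om
  have : ∀ p ∈ P, (1 - if p ∣ b then (1/2:ℝ) else 0) = if p ∣ b then (1/2:ℝ) else 1 := by
    intro p _; split_ifs <;> norm_num
  rw [Finset.prod_congr rfl this, ← Finset.prod_filter, Finset.prod_const]

lemma hwt_nonneg (P : Finset ℕ) (b : ℕ) : 0 ≤ hwt P b := by rw [hwt_eq]; positivity

lemma dvd_mod_iff (p a : ℕ) : p ∣ a % p ↔ p ∣ a := (Nat.dvd_mod_iff (dvd_refl p))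

lemma dvd_lin_mod_iff (p d a : ℕ) : p ∣ d * (a % p) + 1 ↔ p ∣ d * a + 1 := by
  apply Nat.ModEq.dvd_iff _ (dvd_refl p)
  exact Nat.ModEq.add_right _ (Nat.ModEq.mul_left _ (Nat.mod_modEq _ _))

lemma sum_dvd (p : ℕ) (hp : 0 < p) : ∑ a ∈ Finset.range p, (if p ∣ a then (1:ℝ) else 0) = 1 := by
  rw [Finset.sum_eq_single 0]
  · simp
  · intro b hb hb0
    rw [if_neg]
    exact Nat.not_dvd_of_pos_of_lt (Nat.pos_of_ne_zero hb0) (Finset.mem_range.1 hb)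
  · intro h; simp at h; omega

lemma sum_dvd_lin (p d : ℕ) (hp : p.Prime) (hd : ¬ p ∣ d) :
    ∑ a ∈ Finset.range p, (if p ∣ d * a + 1 then (1:ℝ) else 0) = 1 := by
  refine Eq.trans ?_ (sum_dvd p hp.pos)
  have hinj : Set.InjOn (fun a => (d * a + 1) % p) (Finset.range p : Set ℕ) := by
    intro a ha b hb h
    have h1 : d * a + 1 ≡ d * b + 1 [MOD p] := h
    have h2 : d * a ≡ d * b [MOD p] := Nat.ModEq.add_right_cancel' 1 h1
    have h3 : a ≡ b [MOD p] := Nat.ModEq.cancel_left_of_coprime ((Nat.Prime.coprime_iff_not_dvd hp).2 hd) h2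
    exact Nat.ModEq.eq_of_lt_of_lt h3 (Finset.mem_range.1 ha) (Finset.mem_range.1 hb)
  have hmap : Set.MapsTo (fun a => (d * a + 1) % p) (Finset.range p : Set ℕ) (Finset.range p : Set ℕ) := by
    intro a _
    simp [Nat.mod_lt _ hp.pos]
  apply Finset.sum_nbij (fun a => (d * a + 1) % p)
  · exact hmap
  · exact hinj
  · exact Finset.surjOn_of_injOn_of_card_le _ hmap hinj le_rfl
  · intro a _
    simp only [dvd_mod_iff]

lemma sieve_b (P : Finset ℕ) (hP : ∀ p ∈ P, p.Prime) (z k N : ℕ) (hz : ∀ p ∈ P, p ≤ z) (hk : Even k)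
    (hkL : 6 * ∑ p ∈ P, (1:ℝ)/p ≤ k) (hN : exp (3/2 * ∑ p ∈ P, (1:ℝ)/p) * (z:ℝ) ^ (2 * k) ≤ N) :
    ∑ a ∈ Finset.range N, hwt P a ≤ 3 * N * exp (- (1/2 * ∑ p ∈ P, (1:ℝ)/p)) := by
  have hL : 0 ≤ ∑ p ∈ P, (1:ℝ)/p := Finset.sum_nonneg (fun p _ => by positivity)
  rw [Finset.mul_sum]
  apply brun P hP (fun p a => if p ∣ a then (1/2:ℝ) else 0) _ _ _ z k N hz hk (fun p => 1/2 * (1/p))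
  · intro p hp
    have : ∀ a ∈ Finset.range p, (if p ∣ a then (1/2:ℝ) else 0) = 1/2 * (if p ∣ a then (1:ℝ) else 0) := by
      intro a _; split_ifs <;> norm_num
    rw [Finset.sum_congr rfl this, ← Finset.mul_sum, sum_dvd p (hP p hp).pos]; ring
  · rw [← Finset.mul_sum]; linarith
  · rw [← Finset.mul_sum]
    refine le_trans ?_ hN
    gcongr
    linarith
  · intro p a; simp only [dvd_mod_iff]
  · intro p a; split_ifs <;> norm_num
  · intro p _ a; split_ifs <;> norm_num

lemma sieve_a (P : Finset ℕ) (hP : ∀ p ∈ P, p.Prime) (z k N d : ℕ) (hz : ∀ p ∈ P, p ≤ z) (hk : Even k)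
    (hd : ∀ p ∈ P, ¬ p ∣ d)
    (hkL : 6 * ∑ p ∈ P, (1:ℝ)/p ≤ k) (hN : exp (3/2 * ∑ p ∈ P, (1:ℝ)/p) * (z:ℝ) ^ (2 * k) ≤ N) :
    ∑ a ∈ Finset.range N, fwt P d a ≤ 3 * N * exp (- (3/2 * ∑ p ∈ P, (1:ℝ)/p)) := by
  have hL : 0 ≤ ∑ p ∈ P, (1:ℝ)/p := Finset.sum_nonneg (fun p _ => by positivity)
  rw [Finset.mul_sum]
  apply brun P hP (fun p a => (if p ∣ d * a + 1 then (1:ℝ) else 0) + if p ∣ a then (1/2:ℝ) else 0) _ _ _ z k N hz hk (fun p => 3/2 * (1/p))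
  · intro p hp
    have : ∀ a ∈ Finset.range p, (if p ∣ a then (1/2:ℝ) else 0) = 1/2 * (if p ∣ a then (1:ℝ) else 0) := by
      intro a _; split_ifs <;> norm_num
    rw [Finset.sum_add_distrib, Finset.sum_congr rfl this, ← Finset.mul_sum, sum_dvd p (hP p hp).pos,
      sum_dvd_lin p d (hP p hp) (hd p hp)]; ring
  · rw [← Finset.mul_sum]; linarith
  · rw [← Finset.mul_sum]
    exact hN
  · intro p a; simp only [dvd_mod_iff, dvd_lin_mod_iff]
  · intro p a; split_ifs <;> norm_num
  · intro p hp a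
    by_cases h : p ∣ a
    · have : ¬ p ∣ d * a + 1 := by
        intro h2
        have := (Nat.dvd_add_right (Dvd.dvd.mul_left h d)).1 h2
        exact (hP p hp).one_lt.ne' (Nat.dvd_one.1 this)
      simp only [if_pos h, if_neg this]; norm_num
    · simp only [if_neg h]; split_ifs <;> norm_num

lemma fwt_nonneg (P : Finset ℕ) (hP : ∀ p ∈ P, p.Prime) (d a : ℕ) : 0 ≤ fwt P d a := by
  apply Finset.prod_nonneg
  intro p hp
  by_cases h : p ∣ a
  · have : ¬ p ∣ d * a + 1 := by
      intro h2
      have := (Nat.dvd_add_right (Dvd.dvd.mul_left h d)).1 h2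
      exact (hP p hp).one_lt.ne' (Nat.dvd_one.1 this)
    simp only [if_pos h, if_neg this]; norm_num
  · simp only [if_neg h]; split_ifs <;> norm_num

lemma hwt_mul (P : Finset ℕ) (hP : ∀ p ∈ P, p.Prime) (a b : ℕ) (hsq : ∀ p ∈ P, ¬ p ^ 2 ∣ a * b)
    (hom : (om P (a * b) : ℝ) ≤ 4/3 * ∑ p ∈ P, (1:ℝ)/p) :
    1 ≤ exp (4/3 * log 2 * ∑ p ∈ P, (1:ℝ)/p) * (hwt P a * hwt P b) := by
  have e : hwt P a * hwt P b = hwt P (a * b) := by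
    unfold hwt
    rw [← Finset.prod_mul_distrib]
    apply Finset.prod_congr rfl
    intro p hp
    have h1 : p ∣ a * b ↔ p ∣ a ∨ p ∣ b := (hP p hp).dvd_mul
    have h2 : ¬ (p ∣ a ∧ p ∣ b) := by
      rintro ⟨h, h'⟩
      apply hsq p hp
      rw [sq]; exact mul_dvd_mul h h'
    by_cases ha : p ∣ a <;> by_cases hb : p ∣ b <;> simp_all
  rw [e, hwt_eq]
  have : (1/2:ℝ) ^ om P (a*b) = exp (-(log 2 * om P (a*b))) := by
    rw [exp_neg, ← exp_log (show (0:ℝ) < 2 by norm_num), one_div, inv_pow, ← exp_nat_mul, log_exp, mul_comm]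
  rw [this, ← exp_add]
  apply one_le_exp
  have := log_pos (show (1:ℝ) < 2 by norm_num)
  nlinarith

lemma card_mult (X m : ℕ) (hm : 0 < m) : (((Finset.Ioc 0 X).filter (m ∣ ·)).card : ℝ) ≤ X / m := by
  rw [Nat.Ioc_filter_dvd_card_eq_div]
  exact Nat.cast_div_le

lemma om_tail (P : Finset ℕ) (hP : ∀ p ∈ P, p.Prime) (X : ℕ) :
    (((Finset.Ioc 0 X).filter (fun k => 4/3 * ∑ p ∈ P, (1:ℝ)/p < om P k)).card : ℝ)
      ≤ X * exp (- (1/21 * ∑ p ∈ P, (1:ℝ)/p)) := by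
  set L := ∑ p ∈ P, (1:ℝ)/p with hL
  have hL0 : 0 ≤ L := Finset.sum_nonneg (fun p _ => by positivity)
  have h1 : ∑ k ∈ Finset.Ioc 0 X, ∏ p ∈ P, (1 + if p ∣ k then (1/3:ℝ) else 0) ≤ X * exp (1/3 * L) := by
    simp only [Finset.prod_one_add]
    rw [Finset.sum_comm]
    have h : ∀ S ∈ P.powerset, ∑ k ∈ Finset.Ioc 0 X, ∏ p ∈ S, (if p ∣ k then (1/3:ℝ) else 0) ≤ X * ∏ p ∈ S, (1/3 * (1/(p:ℝ))) := by
      intro S hS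
      have hS' := Finset.mem_powerset.1 hS
      have e : ∀ k, ∏ p ∈ S, (if p ∣ k then (1/3:ℝ) else 0) = if (∏ p ∈ S, p) ∣ k then (1/3:ℝ)^S.card else 0 := by
        intro k
        split_ifs with h
        · rw [← Finset.prod_const]
          apply Finset.prod_congr rfl
          intro p hp
          rw [if_pos ((Finset.dvd_prod_of_mem _ hp).trans h)]
        · by_contra h'
          apply h
          apply Finset.prod_primes_dvd
          · intro p hp; exact (hP p (hS' hp)).prime
          · intro p hp
            by_contra h2
            apply h'
            apply Finset.prod_eq_zero hp
            rw [if_neg h2]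
      simp only [e]
      rw [← Finset.sum_filter, Finset.sum_const, nsmul_eq_mul, Finset.prod_mul_distrib, Finset.prod_const]
      have := card_mult X (∏ p ∈ S, p) (Finset.prod_pos fun p hp => (hP p (hS' hp)).pos)
      have e2 : ∏ p ∈ S, (1/(p:ℝ)) = 1 / ((∏ p ∈ S, p : ℕ):ℝ) := by
        rw [Nat.cast_prod]; simp
      rw [e2]
      calc _ ≤ (X:ℝ) / ((∏ p ∈ S, p : ℕ):ℝ) * (1/3)^S.card := by gcongr
        _ = _ := by ring
    refine (Finset.sum_le_sum h).trans ?_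
    rw [← Finset.mul_sum, ← Finset.prod_one_add]
    gcongr
    rw [hL, Finset.mul_sum, exp_sum]
    apply Finset.prod_le_prod
    · intros; positivity
    · intro p _; rw [add_comm]; exact add_one_le_exp _
  have h2 : ∀ k, ∏ p ∈ P, (1 + if p ∣ k then (1/3:ℝ) else 0) = (4/3:ℝ)^om P k := by
    intro k
    unfold om
    have : ∀ p ∈ P, (1 + if p ∣ k then (1/3:ℝ) else 0) = if p ∣ k then (4/3:ℝ) else 1 := by
      intro p _; split_ifs <;> norm_num
    rw [Finset.prod_congr rfl this, ← Finset.prod_filter, Finset.prod_const]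
  simp only [h2] at h1
  have h3 : ((Finset.Ioc 0 X).filter (fun k => 4/3 * L < om P k)).card * exp (8/21 * L) ≤ ∑ k ∈ Finset.Ioc 0 X, (4/3:ℝ)^om P k := by
    rw [← nsmul_eq_mul, ← Finset.sum_const]
    refine le_trans (Finset.sum_le_sum (g := fun k => (4/3:ℝ)^om P k) ?_) (Finset.sum_le_sum_of_subset_of_nonneg (Finset.filter_subset _ _) (fun _ _ _ => by positivity))
    intro k hk
    have hk := (Finset.mem_filter.1 hk).2
    have hl := le_log_one_add_of_nonneg (show (0:ℝ) ≤ 1/3 by norm_num)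
    norm_num at hl
    rw [← exp_log (show (0:ℝ) < 4/3 by norm_num), ← exp_nat_mul]
    apply exp_le_exp.2
    nlinarith
  have h4 := h3.trans h1
  rw [← le_div_iff₀ (exp_pos _)] at h4
  refine h4.trans (le_of_eq ?_)
  rw [mul_div_assoc, ← exp_sub]
  congr 2; ring

lemma sq_tail (P : Finset ℕ) (w z X : ℕ) (hw : 1 ≤ w) (hPw : ∀ p ∈ P, w < p) (hPz : ∀ p ∈ P, p ≤ z) :
    (((Finset.Ioc 0 X).filter (fun k => ∃ p ∈ P, p ^ 2 ∣ k)).card : ℝ) ≤ X * (1 / w) := by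
  by_cases hPe : P = ∅
  · subst hPe; simp; positivity
  obtain ⟨q, hq⟩ := Finset.nonempty_iff_ne_empty.2 hPe
  have hwz : w + 1 ≤ z + 1 := by have := hPw q hq; have := hPz q hq; omega
  have h1 : (Finset.Ioc 0 X).filter (fun k => ∃ p ∈ P, p ^ 2 ∣ k) ⊆ P.biUnion (fun p => (Finset.Ioc 0 X).filter (p^2 ∣ ·)) := by
    intro k hk
    obtain ⟨h, p, hp, hpk⟩ := Finset.mem_filter.1 hk
    exact Finset.mem_biUnion.2 ⟨p, hp, Finset.mem_filter.2 ⟨h, hpk⟩⟩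
  have h2 : (((Finset.Ioc 0 X).filter (fun k => ∃ p ∈ P, p ^ 2 ∣ k)).card : ℝ) ≤ ∑ p ∈ P, (((Finset.Ioc 0 X).filter (p^2 ∣ ·)).card : ℝ) := by
    exact_mod_cast (Finset.card_le_card h1).trans Finset.card_biUnion_le
  refine h2.trans ?_
  have hp2 : ∀ p, w + 1 ≤ p → (2:ℝ) ≤ p := by
    intro p hp
    have : 2 ≤ p := by omega
    exact_mod_cast this
  calc ∑ p ∈ P, (((Finset.Ioc 0 X).filter (p^2 ∣ ·)).card : ℝ) ≤ ∑ p ∈ P, X * ((1:ℝ) / ((p:ℝ) - 1) - 1 / p) := by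
        apply Finset.sum_le_sum
        intro p hp
        have h := hp2 p (hPw p hp)
        refine (card_mult X (p^2) (pow_pos (lt_of_le_of_lt (Nat.zero_le w) (hPw p hp)) 2)).trans ?_
        rw [div_eq_mul_one_div]
        gcongr
        rw [div_sub_div _ _ (by linarith) (by linarith)]
        push_cast
        rw [div_le_div_iff₀ (by nlinarith) (by nlinarith)]
        nlinarith
    _ = X * ∑ p ∈ P, ((1:ℝ) / ((p:ℝ) - 1) - 1 / p) := by rw [Finset.mul_sum]
    _ ≤ _ := by
        gcongr
        have := tele_sum (w+1) (z+1) (by omega) hwz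
        push_cast at this
        rw [add_sub_cancel_right] at this
        refine le_trans (Finset.sum_le_sum_of_subset_of_nonneg ?_ ?_) this
        · intro p hp
          have := hPw p hp; have := hPz p hp
          rw [Finset.mem_Ico]; omega
        · intro m hm _
          exact tele_nonneg m (by have := (Finset.mem_Ico.1 hm).1; omega)

lemma sum_mult (g : ℕ → ℝ) (hg : ∀ b, 0 ≤ g b) (a X : ℕ) (ha : 0 < a) :
    ∑ k ∈ (Finset.Ioc 0 X).filter (a ∣ ·), g (k / a) ≤ ∑ b ∈ Finset.range (X / a + 1), g b := by
  have : ∑ k ∈ (Finset.Ioc 0 X).filter (a ∣ ·), g (k / a) = ∑ b ∈ ((Finset.Ioc 0 X).filter (a ∣ ·)).image (· / a), g b := by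
    rw [Finset.sum_image]
    intro x hx y hy h
    have hx := (Finset.mem_filter.1 hx).2
    have hy := (Finset.mem_filter.1 hy).2
    simp only at h
    rw [← Nat.div_mul_cancel hx, ← Nat.div_mul_cancel hy, h]
  rw [this]
  apply Finset.sum_le_sum_of_subset_of_nonneg
  · intro b hb
    obtain ⟨k, hk, rfl⟩ := Finset.mem_image.1 hb
    have := (Finset.mem_Ioc.1 (Finset.mem_filter.1 hk).1).2
    rw [Finset.mem_range]
    exact Nat.lt_succ_of_le (Nat.div_le_div_right this)
  · intro i _ _; exact hg i

lemma fwt_eq_hwt (P : Finset ℕ) (hP : ∀ p ∈ P, p.Prime) (z d a : ℕ) (hz : ∀ p ∈ P, p ≤ z) (hd : 1 ≤ d)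
    (ha : z ≤ a) (hpr : (d * a + 1).Prime) : fwt P d a = hwt P a := by
  unfold fwt hwt
  apply Finset.prod_congr rfl
  intro p hp
  have : ¬ p ∣ d * a + 1 := by
    intro h
    have h1 := (Nat.prime_dvd_prime_iff_eq (hP p hp) hpr).1 h
    have h2 := hz p hp
    nlinarith
  rw [if_neg this, zero_add]

lemma sum_hwt_div (P : Finset ℕ) (hP : ∀ p ∈ P, p.Prime) (z k Y d j0 j1 : ℕ) (hz : ∀ p ∈ P, p ≤ z) (hk : Even k)
    (hd : ∀ p ∈ P, ¬ p ∣ d) (hd1 : 1 ≤ d)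
    (hkL : 6 * ∑ p ∈ P, (1:ℝ)/p ≤ k) (hN : exp (3/2 * ∑ p ∈ P, (1:ℝ)/p) * (z:ℝ) ^ (2 * k) ≤ Y)
    (hY : Y ≤ 2 ^ j0) (hzj : z ≤ 2 ^ j0) :
    ∑ a ∈ (Finset.Ico (2^j0) (2^j1)).filter (fun a => (d * a + 1).Prime), hwt P a / a
      ≤ 6 * j1 * exp (- (3/2 * ∑ p ∈ P, (1:ℝ)/p)) := by
  set E := exp (- (3/2 * ∑ p ∈ P, (1:ℝ)/p)) with hE
  have hE0 : 0 < E := exp_pos _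
  rw [← Finset.sum_fiberwise_of_maps_to (t := Finset.Ico j0 j1) (g := fun a => Nat.log 2 a)]
  · calc _ ≤ ∑ j ∈ Finset.Ico j0 j1, 6 * E := by
          apply Finset.sum_le_sum
          intro j hj
          have hj0 := (Finset.mem_Ico.1 hj).1
          have hs := sieve_a P hP z k (2^(j+1)) d hz hk hd hkL (hN.trans (by
            have : Y ≤ 2^(j+1) := hY.trans (Nat.pow_le_pow_right (by norm_num) (by omega))
            exact_mod_cast this))
          have h2 : (0:ℝ) < 2 ^ j := by positivity
          calc _ ≤ ∑ a ∈ Finset.range (2^(j+1)), fwt P d a / 2 ^ j := by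
                refine le_trans (b := ∑ a ∈ ((Finset.Ico (2^j0) (2^j1)).filter (fun a => (d * a + 1).Prime)).filter (fun a => Nat.log 2 a = j), fwt P d a / 2 ^ j) ?_ ?_
                · apply Finset.sum_le_sum
                  intro a ha
                  obtain ⟨ha, hl⟩ := Finset.mem_filter.1 ha
                  obtain ⟨ha, hpr⟩ := Finset.mem_filter.1 ha
                  have ha0 := (Finset.mem_Ico.1 ha).1
                  rw [fwt_eq_hwt P hP z d a hz hd1 (hzj.trans ha0) hpr]
                  have h3 : 2 ^ j ≤ a := by
                    rw [← hl]; exact Nat.pow_log_le_self 2 (by have := Nat.pos_of_ne_zero (pow_ne_zero j0 (two_ne_zero (α := ℕ))); omega)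
                  apply div_le_div_of_nonneg_left (hwt_nonneg P a) h2
                  exact_mod_cast h3
                · apply Finset.sum_le_sum_of_subset_of_nonneg
                  · intro a ha
                    obtain ⟨ha, hl⟩ := Finset.mem_filter.1 ha
                    rw [Finset.mem_range, ← hl]
                    exact Nat.lt_pow_succ_log_self (by norm_num) a
                  · intro a _ _
                    exact div_nonneg (fwt_nonneg P hP d a) h2.le
            _ = (∑ a ∈ Finset.range (2^(j+1)), fwt P d a) / 2 ^ j := by rw [Finset.sum_div]
            _ ≤ (3 * (2^(j+1) : ℕ) * E) / 2 ^ j := by gcongr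
            _ = 6 * E := by push_cast; field_simp; ring
      _ = ((j1 - j0 : ℕ) : ℝ) * (6 * E) := by rw [Finset.sum_const, Nat.card_Ico, nsmul_eq_mul]
      _ ≤ j1 * (6 * E) := by
          gcongr
          omega
      _ = _ := by ring
  · intro a ha
    obtain ⟨ha, hpr⟩ := Finset.mem_filter.1 ha
    obtain ⟨h0, h1⟩ := Finset.mem_Ico.1 ha
    have hne : a ≠ 0 := by have := Nat.pos_of_ne_zero (pow_ne_zero j0 (two_ne_zero (α := ℕ))); omega
    rw [Finset.mem_Ico]
    exact ⟨(Nat.le_log_iff_pow_le (by norm_num) hne).2 h0, (Nat.log_lt_iff_lt_pow (by norm_num) hne).2 h1⟩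

lemma superblock (P : Finset ℕ) (hP : ∀ p ∈ P, p.Prime) (n w z k Y j0 j1 X : ℕ) (hw : 1 ≤ w)
    (hnw : n ≤ w) (hPw : ∀ p ∈ P, w < p) (hz : ∀ p ∈ P, p ≤ z) (hk : Even k)
    (hkL : 6 * ∑ p ∈ P, (1:ℝ)/p ≤ k) (hN : exp (3/2 * ∑ p ∈ P, (1:ℝ)/p) * (z:ℝ) ^ (2 * k) ≤ Y)
    (hY : Y ≤ 2 ^ j0) (hzj : z ≤ 2 ^ j0) (hY1 : 1 ≤ Y) (D : Finset ℕ) (hD : D ⊆ Finset.Ioc 0 X)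
    (hDa : ∀ x ∈ D, ∃ d a, 1 ≤ d ∧ d ≤ n ∧ (d * a + 1).Prime ∧ 2 ^ j0 ≤ a ∧ a < 2 ^ j1 ∧ a ∣ x ∧ Y * a ≤ X) :
    (D.card : ℝ) ≤ X * (1 / w + exp (- (1/21 * ∑ p ∈ P, (1:ℝ)/p))
      + 36 * n * j1 * exp (- ((2 - 4/3 * log 2) * ∑ p ∈ P, (1:ℝ)/p))) := by
  classical
  set L := ∑ p ∈ P, (1:ℝ)/p with hL
  have hL0 : 0 ≤ L := Finset.sum_nonneg (fun p _ => by positivity)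
  set D1 := (Finset.Ioc 0 X).filter (fun k => ∃ p ∈ P, p ^ 2 ∣ k) with hD1
  set D2 := (Finset.Ioc 0 X).filter (fun k => 4/3 * L < om P k) with hD2
  set D3 := (D \ D1) \ D2 with hD3
  have hsub : D ⊆ (D1 ∪ D2) ∪ D3 := by
    intro x hx
    simp only [hD3, Finset.mem_union, Finset.mem_sdiff]
    tauto
  have hc : (D.card : ℝ) ≤ D1.card + D2.card + D3.card := by
    have := (Finset.card_le_card hsub).trans (Finset.card_union_le _ _)
    have := Finset.card_union_le D1 D2
    exact_mod_cast (by omega : D.card ≤ D1.card + D2.card + D3.card)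
  have c1 : (D1.card : ℝ) ≤ X * (1 / w) := sq_tail P w z X hw hPw hz
  have c2 : (D2.card : ℝ) ≤ X * exp (-(1/21 * L)) := om_tail P hP X
  have hpow : 0 < 2 ^ j0 := by positivity
  set A : ℕ → Finset ℕ := fun d => ((Finset.Ico (2^j0) (2^j1)).filter (fun a => (d * a + 1).Prime)).filter (fun a => Y * a ≤ X) with hA
  set E := exp (4/3 * log 2 * L) with hE
  have c3 : (D3.card : ℝ) ≤ ∑ d ∈ Finset.Icc 1 n, ∑ a ∈ A d, ∑ x ∈ (Finset.Ioc 0 X).filter (a ∣ ·), E * (hwt P a * hwt P (x / a)) := by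
    have hnn : ∀ a x, 0 ≤ E * (hwt P a * hwt P (x / a)) := fun a x =>
      mul_nonneg (exp_pos _).le (mul_nonneg (hwt_nonneg _ _) (hwt_nonneg _ _))
    calc (D3.card : ℝ) = ∑ x ∈ D3, 1 := by simp
      _ ≤ ∑ x ∈ D3, ∑ d ∈ Finset.Icc 1 n, ∑ a ∈ A d, if a ∣ x then E * (hwt P a * hwt P (x / a)) else 0 := by
          apply Finset.sum_le_sum
          intro x hx
          obtain ⟨hx, hx2⟩ := Finset.mem_sdiff.1 hx
          obtain ⟨hx, hx1⟩ := Finset.mem_sdiff.1 hx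
          obtain ⟨d, a, h1d, hdn, hpr, ha0, ha1, hax, hYa⟩ := hDa x hx
          have hxI := hD hx
          have key : 1 ≤ E * (hwt P a * hwt P (x / a)) := by
            have e : a * (x / a) = x := Nat.mul_div_cancel' hax
            apply hwt_mul P hP
            · intro p hp h
              rw [e] at h
              exact hx1 (Finset.mem_filter.2 ⟨hxI, p, hp, h⟩)
            · rw [e]
              by_contra h
              exact hx2 (Finset.mem_filter.2 ⟨hxI, not_le.1 h⟩)
          have t1 : ∀ d, ∀ a ∈ A d, 0 ≤ if a ∣ x then E * (hwt P a * hwt P (x / a)) else 0 := by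
            intro d a _; split_ifs
            · exact hnn a x
            · exact le_refl 0
          refine le_trans ?_ (Finset.single_le_sum (f := fun d => ∑ a ∈ A d, if a ∣ x then E * (hwt P a * hwt P (x / a)) else 0) (fun d _ => Finset.sum_nonneg (t1 d)) (Finset.mem_Icc.2 ⟨h1d, hdn⟩))
          have ham : a ∈ A d := by
            simp only [hA, Finset.mem_filter, Finset.mem_Ico]
            exact ⟨⟨⟨ha0, ha1⟩, hpr⟩, hYa⟩
          refine le_trans ?_ (Finset.single_le_sum (f := fun a => if a ∣ x then E * (hwt P a * hwt P (x / a)) else 0) (t1 d) ham)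
          simp only [if_pos hax]
          exact key
      _ ≤ ∑ x ∈ Finset.Ioc 0 X, ∑ d ∈ Finset.Icc 1 n, ∑ a ∈ A d, if a ∣ x then E * (hwt P a * hwt P (x / a)) else 0 := by
          apply Finset.sum_le_sum_of_subset_of_nonneg
          · intro x hx
            exact hD (Finset.mem_sdiff.1 (Finset.mem_sdiff.1 hx).1).1
          · intro x _ _
            refine Finset.sum_nonneg (fun d _ => Finset.sum_nonneg (fun a _ => ?_))
            split_ifs
            · exact hnn a x
            · exact le_refl 0
      _ = _ := by
          rw [Finset.sum_comm]
          apply Finset.sum_congr rfl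
          intro d _
          rw [Finset.sum_comm]
          apply Finset.sum_congr rfl
          intro a _
          rw [Finset.sum_filter]
  have hin : ∀ d, ∀ a ∈ A d, ∑ x ∈ (Finset.Ioc 0 X).filter (a ∣ ·), E * (hwt P a * hwt P (x / a))
      ≤ (6 * X * E * exp (-(1/2 * L))) * (hwt P a / a) := by
    intro d a ha
    simp only [hA, Finset.mem_filter, Finset.mem_Ico] at ha
    obtain ⟨⟨⟨ha0, ha1⟩, hpr⟩, hYa⟩ := ha
    have hapos : 0 < a := by omega
    have hYX : Y ≤ X / a := (Nat.le_div_iff_mul_le hapos).2 hYa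
    have hs := sieve_b P hP z k (X / a + 1) hz hk hkL (hN.trans (by
      have : Y ≤ X / a + 1 := by omega
      exact_mod_cast this))
    have hs2 := (sum_mult (hwt P) (hwt_nonneg P) a X hapos).trans hs
    have hXa : ((X / a + 1 : ℕ) : ℝ) ≤ 2 * (X / a) := by
      have hXa1 : 1 ≤ X / a := by omega
      have h3 : ((X / a : ℕ) : ℝ) ≤ X / a := Nat.cast_div_le
      have h4 : (1:ℝ) ≤ ((X / a : ℕ) : ℝ) := by exact_mod_cast hXa1
      push_cast; linarith
    rw [← Finset.mul_sum, ← Finset.mul_sum]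
    calc E * (hwt P a * ∑ x ∈ (Finset.Ioc 0 X).filter (a ∣ ·), hwt P (x / a))
        ≤ E * (hwt P a * (3 * (2 * (X / a)) * exp (-(1/2 * L)))) := by
          apply mul_le_mul_of_nonneg_left _ (exp_pos _).le
          apply mul_le_mul_of_nonneg_left _ (hwt_nonneg _ _)
          refine hs2.trans ?_
          gcongr
      _ = _ := by ring
  have hfin : (D3.card : ℝ) ≤ ∑ d ∈ Finset.Icc 1 n, (6 * X * E * exp (-(1/2 * L))) * (6 * j1 * exp (-(3/2 * L))) := by
    refine c3.trans (Finset.sum_le_sum ?_)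
    intro d hd
    obtain ⟨h1d, hdn⟩ := Finset.mem_Icc.1 hd
    refine (Finset.sum_le_sum (hin d)).trans ?_
    rw [← Finset.mul_sum]
    apply mul_le_mul_of_nonneg_left _ (by positivity)
    refine le_trans ?_ (sum_hwt_div P hP z k Y d j0 j1 hz hk ?_ h1d hkL hN hY hzj)
    · apply Finset.sum_le_sum_of_subset_of_nonneg (Finset.filter_subset _ _)
      intro a _ _
      exact div_nonneg (hwt_nonneg _ _) (Nat.cast_nonneg _)
    · intro p hp h
      have := Nat.le_of_dvd (by omega) h
      have := hPw p hp
      omega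
  have heq : ∑ d ∈ Finset.Icc 1 n, (6 * X * E * exp (-(1/2 * L))) * (6 * j1 * exp (-(3/2 * L)))
      = X * (36 * n * j1 * exp (- ((2 - 4/3 * log 2) * L))) := by
    rw [Finset.sum_const, Nat.card_Icc, nsmul_eq_mul]
    have : exp (- ((2 - 4/3 * log 2) * L)) = E * exp (-(1/2 * L)) * exp (-(3/2 * L)) := by
      rw [hE, ← exp_add, ← exp_add]; congr 1; ring
    rw [this]; push_cast [Nat.add_sub_cancel]; ring
  rw [heq] at hfin
  linarith

def Ys (s : ℕ) : ℕ := 2 ^ (5000 * s * 2 ^ (99 * s))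

def zs (s : ℕ) : ℕ := 2 ^ (2 ^ (99 * s))

def Ps (s : ℕ) : Finset ℕ := (zs s).primesBelow.filter (fun p => 2 ^ (2 * s) < p)

lemma Ls_upper (s : ℕ) (hs : 1 ≤ s) : ∑ p ∈ Ps s, (1:ℝ)/p ≤ 282 * s := by
  have h1 : ∑ p ∈ Ps s, (1:ℝ)/p ≤ Hp (zs s) := by
    apply Finset.sum_le_sum_of_subset_of_nonneg (Finset.filter_subset _ _)
    intro p _ _; positivity
  have h2 := Hp_upper (2 ^ (99 * s)) Nat.one_le_two_pow
  have h3 : log ((2 ^ (99 * s) : ℕ) : ℝ) = 99 * s * log 2 := by push_cast; rw [log_pow]; push_cast; ring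
  rw [h3] at h2
  have h4 := log_two_lt_d9
  have hs' : (1:ℝ) ≤ s := by exact_mod_cast hs
  unfold zs at h1
  nlinarith

lemma Ls_lower (s : ℕ) (hs : 200 ≤ s) : 97 * s * log 2 ≤ ∑ p ∈ Ps s, (1:ℝ)/p := by
  have hl1 := log_two_lt_d9
  have hl2 := log_two_gt_d9
  have hs' : (200:ℝ) ≤ s := by exact_mod_cast hs
  have hzpos : 1 ≤ zs s := Nat.one_le_two_pow
  have h1 : 99 * s * log 2 - 2 ≤ Hp (zs s) := by
    have h := Hp_lower (zs s) hzpos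
    have e : log (zs s : ℝ) = exp (99 * s * log 2) * log 2 := by
      unfold zs
      push_cast
      rw [log_pow]
      push_cast
      congr 1
      rw [show (99 * s * log 2 : ℝ) = log 2 * ((99 * s : ℕ) : ℝ) by push_cast; ring, ← rpow_def_of_pos (by norm_num), rpow_natCast]
    have e2 : exp (-1) ≤ log 2 := by
      rw [exp_neg]
      have := exp_one_gt_d9
      calc (exp 1)⁻¹ ≤ (2.7:ℝ)⁻¹ := by gcongr; linarith
        _ ≤ _ := by norm_num; linarith
    have e3 : exp (99 * s * log 2 + -1) ≤ exp (Hp (zs s) + 1) := by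
      rw [exp_add]
      refine le_trans ?_ h
      rw [e]
      exact mul_le_mul_of_nonneg_left e2 (exp_pos _).le
    have := exp_le_exp.1 e3
    linarith
  have h2 : Hp (zs s) ≤ ∑ p ∈ Ps s, (1:ℝ)/p + Hp (2 ^ (2 * s + 1)) := by
    unfold Ps
    have h : Hp (zs s) = ∑ p ∈ (zs s).primesBelow.filter (fun p => 2 ^ (2 * s) < p), (1:ℝ)/p + ∑ p ∈ (zs s).primesBelow.filter (fun p => ¬ 2 ^ (2 * s) < p), (1:ℝ)/p := by
      rw [Finset.sum_filter_add_sum_filter_not]; rfl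
    rw [h]
    gcongr
    apply Finset.sum_le_sum_of_subset_of_nonneg
    · intro p hp
      obtain ⟨hp, hp2⟩ := Finset.mem_filter.1 hp
      have hpp := Nat.prime_of_mem_primesBelow hp
      rw [Nat.mem_primesBelow]
      refine ⟨?_, hpp⟩
      have : 0 < 2 ^ (2 * s) := by positivity
      rw [pow_succ]; omega
    · intro p _ _; positivity
  have h3 := Hp_upper (2 * s + 1) (by omega)
  have h4 : log ((2 * s + 1 : ℕ) : ℝ) ≤ (2 * s + 1) / 64 + 6 * log 2 - 1 := by
    have h := log_le_sub_one_of_pos (x := ((2 * s + 1 : ℝ)) / 64) (by positivity)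
    rw [log_div (by positivity) (by norm_num)] at h
    have : log (64:ℝ) = 6 * log 2 := by
      rw [show (64:ℝ) = 2 ^ 6 by norm_num, log_pow]; norm_num
    push_cast
    linarith
  nlinarith

lemma eps_bound (n s : ℕ) (hs' : (200:ℝ) ≤ s) (hn : n ≤ 2 ^ s) (L : ℝ) (hLo : 97 * s * log 2 ≤ L) :
    1 / ((2 ^ (2 * s) : ℕ) : ℝ) + exp (- (1/21 * L))
      + 36 * n * ((2 ^ (100 * (s + 1)) : ℕ) : ℝ) * exp (- ((2 - 4/3 * log 2) * L)) ≤ (1 / 2) ^ s := by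
  have hl1 := log_two_lt_d9
  have hl2 := log_two_gt_d9
  have hexp2 : ∀ t : ℝ, exp (t * log 2) = 2 ^ t := by
    intro t; rw [rpow_def_of_pos (by norm_num)]; congr 1; ring
  have q1 : (1:ℝ) / ((2 ^ (2 * s) : ℕ) : ℝ) = 2 ^ (-(2 * (s:ℝ))) := by
    rw [rpow_neg (by norm_num), one_div]
    push_cast
    rw [← rpow_natCast]; push_cast; rfl
  have q2 : exp (-(1/21 * L)) ≤ 2 ^ (-(2 * (s:ℝ))) := by
    rw [← hexp2]
    apply exp_le_exp.2
    nlinarith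
  have q3 : 36 * (n:ℝ) * ((2 ^ (100 * (s + 1)) : ℕ) : ℝ) * exp (-((2 - 4/3 * log 2) * L)) ≤ 2 ^ (-(2 * (s:ℝ))) := by
    have r1 : (n:ℝ) ≤ 2 ^ (s:ℝ) := by rw [rpow_natCast]; exact_mod_cast hn
    have r2 : ((2 ^ (100 * (s + 1)) : ℕ) : ℝ) = 2 ^ (100 * (s:ℝ) + 100) := by
      push_cast; rw [← rpow_natCast]; push_cast; congr 1; ring
    have r3 : exp (-((2 - 4/3 * log 2) * L)) ≤ 2 ^ (-(104 * (s:ℝ))) := by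
      rw [← hexp2]
      apply exp_le_exp.2
      have : 1.0758 * L ≤ (2 - 4/3 * log 2) * L := by
        apply mul_le_mul_of_nonneg_right _ (le_trans (by positivity) hLo)
        linarith
      have h5 : 0 ≤ (s:ℝ) * log 2 := by positivity
      nlinarith
    rw [r2]
    calc 36 * (n:ℝ) * 2 ^ (100 * (s:ℝ) + 100) * exp (-((2 - 4/3 * log 2) * L))
        ≤ 2 ^ (6:ℝ) * 2 ^ (s:ℝ) * 2 ^ (100 * (s:ℝ) + 100) * 2 ^ (-(104 * (s:ℝ))) := by
          have h36 : (36:ℝ) ≤ 2 ^ (6:ℝ) := by norm_num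
          have t1 : (0:ℝ) ≤ 2 ^ (100 * (s:ℝ) + 100) := by positivity
          have t2 := mul_le_mul h36 r1 (Nat.cast_nonneg n) (by positivity)
          exact mul_le_mul (mul_le_mul_of_nonneg_right t2 t1) r3 (exp_pos _).le (by positivity)
      _ = 2 ^ (6 + s + (100 * (s:ℝ) + 100) + (-(104 * (s:ℝ)))) := by
          rw [rpow_add (by norm_num) _ (-(104 * (s:ℝ))), rpow_add (by norm_num) (6 + (s:ℝ)), rpow_add (by norm_num) 6]
      _ ≤ _ := by
          apply rpow_le_rpow_of_exponent_le (by norm_num)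
          linarith
  rw [q1]
  have q4 : (2:ℝ) ^ (-(2 * (s:ℝ))) * 4 ≤ (1/2) ^ s := by
    have : (1/2:ℝ) ^ s = 2 ^ (-(s:ℝ)) := by
      rw [rpow_neg (by norm_num), rpow_natCast, one_div, inv_pow]
    rw [this]
    calc (2:ℝ) ^ (-(2 * (s:ℝ))) * 4 = 2 ^ (-(2 * (s:ℝ)) + 2) := by
          rw [rpow_add (by norm_num)]; norm_num
      _ ≤ _ := by
          apply rpow_le_rpow_of_exponent_le (by norm_num)
          linarith
  have q5 : (0:ℝ) < 2 ^ (-(2 * (s:ℝ))) := by positivity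
  linarith

lemma block (n s X : ℕ) (hs : 200 ≤ s) (hn : n ≤ 2 ^ s) (D : Finset ℕ) (hD : D ⊆ Finset.Ioc 0 X)
    (hDa : ∀ x ∈ D, ∃ d a, 1 ≤ d ∧ d ≤ n ∧ (d * a + 1).Prime ∧ 2 ^ (2 ^ (100 * s)) ≤ a ∧
      a < 2 ^ (2 ^ (100 * (s + 1))) ∧ a ∣ x ∧ Ys s * a ≤ X) :
    (D.card : ℝ) ≤ X * (1 / 2) ^ s := by
  have hl1 := log_two_lt_d9
  have hl2 := log_two_gt_d9
  have hs' : (200:ℝ) ≤ s := by exact_mod_cast hs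
  have hU := Ls_upper s (by omega)
  have hLo := Ls_lower s hs
  have hexp2 : ∀ t : ℝ, exp (t * log 2) = 2 ^ t := by
    intro t; rw [rpow_def_of_pos (by norm_num)]; congr 1; ring
  have hs2 : 5000 * s ≤ 2 ^ s := by
    clear * - hs
    induction s, hs using Nat.le_induction with
    | base => norm_num
    | succ m hm ih => rw [pow_succ]; omega
  have h99 : 2 ^ (99 * s) * 2 ^ s = 2 ^ (100 * s) := by rw [← pow_add]; congr 1; ring
  have h := superblock (Ps s) (fun p hp => Nat.prime_of_mem_primesBelow (Finset.mem_filter.1 hp).1)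
    n (2 ^ (2 * s)) (zs s) (1700 * s) (Ys s) (2 ^ (100 * s)) (2 ^ (100 * (s + 1))) X Nat.one_le_two_pow
    (hn.trans (Nat.pow_le_pow_right (by norm_num) (by omega)))
    (fun p hp => (Finset.mem_filter.1 hp).2)
    (fun p hp => (Nat.lt_of_mem_primesBelow (Finset.mem_filter.1 hp).1).le)
    ⟨850 * s, by ring⟩
    (by push_cast; linarith)
    (by
      have e1 : exp (3/2 * ∑ p ∈ Ps s, (1:ℝ)/p) ≤ 2 ^ (850 * s) := by
        have : exp (3/2 * ∑ p ∈ Ps s, (1:ℝ)/p) ≤ exp ((850 * s : ℕ) * log 2) := by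
          apply exp_le_exp.2
          push_cast
          nlinarith
        rw [hexp2, rpow_natCast] at this
        exact this
      have e2 : ((zs s : ℕ) : ℝ) ^ (2 * (1700 * s)) = 2 ^ (2 ^ (99 * s) * (2 * (1700 * s))) := by
        unfold zs; push_cast; rw [← pow_mul]
      rw [e2]
      calc _ ≤ (2:ℝ) ^ (850 * s) * 2 ^ (2 ^ (99 * s) * (2 * (1700 * s))) := by gcongr
        _ = 2 ^ (850 * s + 2 ^ (99 * s) * (2 * (1700 * s))) := by rw [pow_add]
        _ ≤ _ := by
          unfold Ys
          push_cast
          apply pow_le_pow_right₀ (by norm_num)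
          have : 1 ≤ 2 ^ (99 * s) := Nat.one_le_two_pow
          nlinarith)
    (by
      unfold Ys
      apply Nat.pow_le_pow_right (by norm_num)
      rw [← h99, mul_comm]
      exact Nat.mul_le_mul_left _ hs2)
    (by
      unfold zs
      apply Nat.pow_le_pow_right (by norm_num)
      apply Nat.pow_le_pow_right (by norm_num)
      omega)
    Nat.one_le_two_pow D hD hDa
  refine h.trans ?_
  apply mul_le_mul_of_nonneg_left _ (Nat.cast_nonneg X)
  exact eps_bound n s hs' hn _ hLo

def BB (n a : ℕ) : Prop := ∃ d, 1 ≤ d ∧ d ≤ n ∧ (d * a + 1).Prime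

def Ts (s : ℕ) : ℕ := 2 ^ (2 ^ (100 * s))

lemma lt_Ts (s : ℕ) : s < Ts s := by
  have h1 : s < 2 ^ s := Nat.lt_two_pow_self
  have h2 : 2 ^ s ≤ 2 ^ (100 * s) := Nat.pow_le_pow_right (by norm_num) (by omega)
  have h3 : 2 ^ (100 * s) < Ts s := Nat.lt_two_pow_self
  omega

lemma Ts_find (s1 a : ℕ) (h : Ts s1 ≤ a) : ∃ s, s1 ≤ s ∧ Ts s ≤ a ∧ a < Ts (s + 1) := by
  refine ⟨Nat.findGreatest (fun s => Ts s ≤ a) a, ?_, ?_, ?_⟩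
  · exact Nat.le_findGreatest ((lt_Ts s1).le.trans h) h
  · exact Nat.findGreatest_spec (P := fun s => Ts s ≤ a) (m := s1) ((lt_Ts s1).le.trans h) h
  · by_contra hh
    have hh := not_lt.1 hh
    have := Nat.le_findGreatest (P := fun s => Ts s ≤ a) ((lt_Ts _).le.trans hh) hh
    omega

lemma tail_main (n s1 X : ℕ) (hs : 200 ≤ s1) (hn : n ≤ 2 ^ s1) (D : Finset ℕ) (hD : D ⊆ Finset.Ioc 0 X)
    (hDa : ∀ x ∈ D, ∃ s a, BB n a ∧ s1 ≤ s ∧ Ts s ≤ a ∧ a < Ts (s + 1) ∧ a ∣ x ∧ Ys s * a ≤ X) :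
    (D.card : ℝ) ≤ X * (2 * (1 / 2) ^ s1) := by
  classical
  set Ds : ℕ → Finset ℕ := fun s => D.filter (fun x => ∃ a, BB n a ∧ Ts s ≤ a ∧ a < Ts (s + 1) ∧ a ∣ x ∧ Ys s * a ≤ X) with hDs
  have hsub : D ⊆ (Finset.Ico s1 (X + s1 + 1)).biUnion Ds := by
    intro x hx
    obtain ⟨s, a, h1, h2, h3, h4, h5, h6⟩ := hDa x hx
    refine Finset.mem_biUnion.2 ⟨s, ?_, Finset.mem_filter.2 ⟨hx, a, h1, h3, h4, h5, h6⟩⟩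
    rw [Finset.mem_Ico]
    have hxI := Finset.mem_Ioc.1 (hD hx)
    have := Nat.le_of_dvd hxI.1 h5
    have := lt_Ts s
    omega
  have h1 : (D.card : ℝ) ≤ ∑ s ∈ Finset.Ico s1 (X + s1 + 1), ((Ds s).card : ℝ) := by
    exact_mod_cast (Finset.card_le_card hsub).trans Finset.card_biUnion_le
  refine h1.trans ?_
  have h2 : ∀ s ∈ Finset.Ico s1 (X + s1 + 1), ((Ds s).card : ℝ) ≤ X * (1/2) ^ s := by
    intro s hs2
    have hs3 := (Finset.mem_Ico.1 hs2).1
    apply block n s X (by omega) (hn.trans (Nat.pow_le_pow_right (by norm_num) hs3)) _ ((Finset.filter_subset _ _).trans hD)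
    intro x hx
    obtain ⟨_, a, ⟨d, k1, k2, k3⟩, h3, h4, h5, h6⟩ := Finset.mem_filter.1 hx
    exact ⟨d, a, k1, k2, k3, h3, h4, h5, h6⟩
  refine (Finset.sum_le_sum h2).trans ?_
  rw [← Finset.mul_sum]
  gcongr
  rw [geom_sum_Ico' (by norm_num) (by omega)]
  have : (0:ℝ) ≤ (1/2) ^ (X + s1 + 1) := by positivity
  rw [show (1 - 1/2 : ℝ) = 1/2 by norm_num]
  linarith

lemma pi_bound (n X b : ℕ) (hn : 1 ≤ n) (hX : 16 ≤ X) (hb : 1 ≤ b) (hbX : b ^ 2 ≤ X) :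
    (Nat.primeCounting ⌊(2 * n * X / b : ℝ)⌋₊ : ℝ) ≤ 20 * n * X / (b * log X) := by
  set y : ℝ := 2 * n * X / b with hy
  have hn' : (1:ℝ) ≤ n := by exact_mod_cast hn
  have hX' : (16:ℝ) ≤ X := by exact_mod_cast hX
  have hb' : (1:ℝ) ≤ b := by exact_mod_cast hb
  have hbX' : (b:ℝ) ^ 2 ≤ X := by exact_mod_cast hbX
  have hlog : 0 < log X := log_pos (by linarith)
  have hsq : √X * √X = (X:ℝ) := mul_self_sqrt (by linarith)
  have hs1 : 1 ≤ √(X:ℝ) := by rw [one_le_sqrt]; linarith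
  have hbs : (b:ℝ) ≤ √X := le_sqrt_of_sq_le hbX'
  have hys : √X ≤ y := by
    rw [hy, le_div_iff₀ (by linarith)]
    nlinarith
  have hy2 : 2 * √X ≤ y := by
    rw [hy, le_div_iff₀ (by linarith)]
    nlinarith
  have hy1 : 1 < y := by linarith
  have h := Chebyshev.pi_le_log4_mul_div hy1
  refine h.trans ?_
  have hl4 : log 4 ≤ 1.4 := by
    rw [show (4:ℝ) = 2 ^ 2 by norm_num, log_pow]
    have := log_two_lt_d9
    push_cast; linarith
  have hl : log X / 4 ≤ log √y := by
    rw [log_sqrt (by linarith)]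
    have : log √X ≤ log y := log_le_log (by linarith) hys
    rw [log_sqrt (by linarith)] at this
    linarith
  have hsy : √(√X) ≤ √y := sqrt_le_sqrt hys
  have hl2 : log X / 4 ≤ √y := by
    have h1 : log (√(√X)) = log X / 4 := by
      rw [log_sqrt (by positivity), log_sqrt (by linarith)]; ring
    rw [← h1]
    refine le_trans (log_le_self (by positivity)) hsy
  have hyy : √y * √y = y := mul_self_sqrt (by linarith)
  have e1 : log 4 * y / log √y ≤ 1.4 * y / (log X / 4) := by gcongr
  have e2 : √y ≤ y / (log X / 4) := by
    rw [le_div_iff₀ (by linarith)]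
    nlinarith [sqrt_nonneg y]
  have e3 : 1.4 * y / (log X / 4) + y / (log X / 4) ≤ 20 * n * X / (b * log X) := by
    have : 1.4 * y / (log X / 4) + y / (log X / 4) = 19.2 * n * X / (b * log X) := by
      rw [hy]; field_simp; ring
    rw [this]
    gcongr
    norm_num
  linarith

lemma count_pr (d n X b : ℕ) (hd : 1 ≤ d) (hdn : d ≤ n) (hb : 1 ≤ b) (hbX : b ≤ X) :
    (((Finset.Icc 1 (X / b)).filter (fun a => (d * a + 1).Prime)).card) ≤ Nat.primeCounting ⌊(2 * n * X / b : ℝ)⌋₊ := by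
  rw [Nat.primeCounting, Nat.primeCounting', Nat.count_eq_card_filter_range]
  apply Finset.card_le_card_of_injOn (fun a => d * a + 1)
  · intro a ha
    obtain ⟨ha, hp⟩ := Finset.mem_filter.1 (Finset.mem_coe.1 ha)
    obtain ⟨h1, h2⟩ := Finset.mem_Icc.1 ha
    simp only [Finset.coe_filter, Finset.mem_range, Set.mem_setOf_eq]
    refine ⟨Nat.lt_succ_of_le (Nat.le_floor ?_), hp⟩
    have h3 : a * b ≤ X := (Nat.le_div_iff_mul_le (by omega)).1 h2
    have h3' : (a:ℝ) * b ≤ X := by exact_mod_cast h3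
    have hb' : (1:ℝ) ≤ b := by exact_mod_cast hb
    have hbX' : (b:ℝ) ≤ X := by exact_mod_cast hbX
    have hdn' : (d:ℝ) ≤ n := by exact_mod_cast hdn
    have hd' : (1:ℝ) ≤ d := by exact_mod_cast hd
    rw [le_div_iff₀ (by linarith)]
    push_cast
    nlinarith
  · intro x _ y _ h
    simp only at h
    have : d * x = d * y := by omega
    exact Nat.eq_of_mul_eq_mul_left (by omega) this

lemma tail_edge (n Q X : ℕ) (hn : 1 ≤ n) (hQ : 2 ≤ Q) (hX : 16 ≤ X) (hXQ : (Q:ℝ) ≤ log X) (D : Finset ℕ) (hD : D ⊆ Finset.Ioc 0 X)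
    (hDa : ∀ x ∈ D, ∃ a, BB n a ∧ a ∣ x ∧ (x / a) ^ Q ≤ X) :
    (D.card : ℝ) ≤ X * (40 * n ^ 2 / Q) := by
  classical
  set B := Nat.findGreatest (fun b => b ^ Q ≤ X) X with hB
  have hBQ : B ^ Q ≤ X := Nat.findGreatest_spec (P := fun b => b ^ Q ≤ X) (m := 0) (Nat.zero_le _) (by rw [zero_pow (by omega)]; omega)
  have hBge : ∀ b, b ^ Q ≤ X → b ≤ B := fun b hb =>
    Nat.le_findGreatest ((Nat.le_self_pow (by omega) b).trans hb) hb
  have hb1 : ∀ b, 1 ≤ b → b ≤ B → b ^ 2 ≤ X ∧ b ≤ X := by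
    intro b h1 h2
    have h3 : b ^ 2 ≤ X := calc b ^ 2 ≤ b ^ Q := Nat.pow_le_pow_right h1 hQ
      _ ≤ B ^ Q := Nat.pow_le_pow_left h2 Q
      _ ≤ X := hBQ
    exact ⟨h3, by nlinarith⟩
  have hlog : 0 < log X := log_pos (by have : (16:ℝ) ≤ X := by exact_mod_cast hX
                                       linarith)
  have hsub : D ⊆ (Finset.Icc 1 n).biUnion (fun d => (Finset.Icc 1 B).biUnion (fun b =>
      ((Finset.Icc 1 (X / b)).filter (fun a => (d * a + 1).Prime)).image (· * b))) := by
    intro x hx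
    obtain ⟨a, ⟨d, k1, k2, k3⟩, hax, hxa⟩ := hDa x hx
    have hxI := Finset.mem_Ioc.1 (hD hx)
    have e : a * (x / a) = x := Nat.mul_div_cancel' hax
    have hb0 : 1 ≤ x / a := by
      rcases Nat.eq_zero_or_pos (x / a) with h | h
      · rw [h] at e; omega
      · exact h
    have ha0 : 1 ≤ a := by
      rcases Nat.eq_zero_or_pos a with h | h
      · rw [h] at e; omega
      · exact h
    simp only [Finset.mem_biUnion, Finset.mem_image, Finset.mem_filter, Finset.mem_Icc]
    exact ⟨d, ⟨k1, k2⟩, x / a, ⟨hb0, hBge _ hxa⟩, a, ⟨⟨ha0, (Nat.le_div_iff_mul_le hb0).2 (e.le.trans hxI.2)⟩, k3⟩, e⟩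
  have h1 : (D.card : ℝ) ≤ ∑ d ∈ Finset.Icc 1 n, ∑ b ∈ Finset.Icc 1 B, (20 * n * X / (b * log X) : ℝ) := by
    have h2 : D.card ≤ ∑ d ∈ Finset.Icc 1 n, ∑ b ∈ Finset.Icc 1 B, ((Finset.Icc 1 (X / b)).filter (fun a => (d * a + 1).Prime)).card := by
      refine (Finset.card_le_card hsub).trans (Finset.card_biUnion_le.trans (Finset.sum_le_sum ?_))
      intro d _
      refine Finset.card_biUnion_le.trans (Finset.sum_le_sum ?_)
      intro b _
      exact Finset.card_image_le
    refine le_trans (b := ∑ d ∈ Finset.Icc 1 n, ∑ b ∈ Finset.Icc 1 B, (((Finset.Icc 1 (X / b)).filter (fun a => (d * a + 1).Prime)).card : ℝ)) (by exact_mod_cast h2) ?_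
    apply Finset.sum_le_sum
    intro d hd
    obtain ⟨hd1, hd2⟩ := Finset.mem_Icc.1 hd
    apply Finset.sum_le_sum
    intro b hb
    obtain ⟨hb1', hb2⟩ := Finset.mem_Icc.1 hb
    have hbb := hb1 b hb1' hb2
    refine le_trans ?_ (pi_bound n X b hn hX hb1' hbb.1)
    exact_mod_cast count_pr d n X b hd1 hd2 hb1' hbb.2
  refine h1.trans ?_
  rw [Finset.sum_const, Nat.card_Icc, nsmul_eq_mul, Nat.add_sub_cancel]
  have h3 : ∑ b ∈ Finset.Icc 1 B, (20 * n * X / (b * log X) : ℝ) = 20 * n * X / log X * (harmonic B : ℝ) := by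
    rw [harmonic_eq_sum_Icc]
    push_cast
    rw [Finset.mul_sum]
    apply Finset.sum_congr rfl
    intro b _
    rw [mul_comm (b:ℝ), ← div_div, div_eq_mul_inv _ (b:ℝ)]
  rw [h3]
  have hB1 : 1 ≤ B := hBge 1 (by simp; omega)
  have h4 : (harmonic B : ℝ) ≤ 2 * log X / Q := by
    have h5 := harmonic_le_one_add_log B
    have h6 : Q * log B ≤ log X := by
      rw [← log_pow]
      apply log_le_log
      · have : 0 < B ^ Q := by positivity
        exact_mod_cast this
      · exact_mod_cast hBQ
    have hQ' : (0:ℝ) < Q := by exact_mod_cast (by omega : 0 < Q)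
    rw [le_div_iff₀ hQ']
    nlinarith
  calc (n:ℝ) * (20 * n * X / log X * (harmonic B : ℝ)) ≤ n * (20 * n * X / log X * (2 * log X / Q)) := by gcongr
    _ = _ := by field_simp; ring

lemma tail (n : ℕ) (hn : 1 ≤ n) (ε : ℝ) (hε : 0 < ε) : ∃ t0 X0 : ℕ, ∀ X, X0 ≤ X → ∀ D ⊆ Finset.Ioc 0 X,
    (∀ x ∈ D, ∃ a, BB n a ∧ t0 ≤ a ∧ a ∣ x) → (D.card : ℝ) ≤ ε * X := by
  classical
  obtain ⟨Q, hQ⟩ := exists_nat_ge (max 2 (80 * (n:ℝ) ^ 2 / ε))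
  have hQ2 : 2 ≤ Q := by exact_mod_cast (le_max_left _ _).trans hQ
  have hQ3 : 40 * (n:ℝ) ^ 2 / Q ≤ ε / 2 := by
    have h := (le_max_right _ _).trans hQ
    have hQ' : (0:ℝ) < Q := by exact_mod_cast (by omega : 0 < Q)
    rw [div_le_iff₀ hε] at h
    rw [div_le_iff₀ hQ']
    linarith
  obtain ⟨s2, hs2⟩ := exists_pow_lt_of_lt_one (show 0 < ε / 4 by linarith) (show (1/2:ℝ) < 1 by norm_num)
  have hgrow : ∀ m : ℕ, 5000 * Q ≤ m → 5000 * (m * m * m) ≤ 2 ^ m → 5000 * m * Q ≤ 2 ^ m := by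
    intro m h1 h2
    nlinarith [Nat.mul_le_mul_left m h1]
  have hcube : ∀ m : ℕ, 200 ≤ m → 5000 * (m * m * m) ≤ 2 ^ m := by
    intro m hm
    induction m, hm using Nat.le_induction with
    | base => norm_num
    | succ m hm ih =>
      rw [pow_succ]
      have : (m+1)*(m+1)*(m+1) ≤ 2 * (m*m*m) := by nlinarith [Nat.mul_le_mul hm hm, Nat.mul_le_mul (Nat.mul_le_mul hm hm) hm, Nat.mul_le_mul (Nat.mul_le_mul hm (le_refl m)) (le_refl m)]
      omega
  set s1 := 200 + n + s2 + 5000 * Q with hs1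
  refine ⟨Ts s1, max 16 ⌈exp Q⌉₊, ?_⟩
  intro X hX D hD hDa
  have hX16 : 16 ≤ X := (le_max_left _ _).trans hX
  have hXQ : (Q:ℝ) ≤ log X := by
    rw [le_log_iff_exp_le (by exact_mod_cast (by omega : 0 < X))]
    exact (Nat.le_ceil _).trans (by exact_mod_cast (le_max_right _ _).trans hX)
  set D1 := D.filter (fun x => ∃ s a, BB n a ∧ s1 ≤ s ∧ Ts s ≤ a ∧ a < Ts (s + 1) ∧ a ∣ x ∧ Ys s * a ≤ X) with hD1
  set D2 := D.filter (fun x => ∃ a, BB n a ∧ a ∣ x ∧ (x / a) ^ Q ≤ X) with hD2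
  have hsub : D ⊆ D1 ∪ D2 := by
    intro x hx
    obtain ⟨a, hB, hta, hax⟩ := hDa x hx
    obtain ⟨s, h1, h2, h3⟩ := Ts_find s1 a hta
    have hxI := Finset.mem_Ioc.1 (hD hx)
    rw [Finset.mem_union]
    by_cases hY : Ys s * a ≤ X
    · left
      exact Finset.mem_filter.2 ⟨hx, s, a, hB, h1, h2, h3, hax, hY⟩
    · right
      refine Finset.mem_filter.2 ⟨hx, a, hB, hax, ?_⟩
      have hale : a ≤ x := Nat.le_of_dvd hxI.1 hax
      have hb : x / a ≤ Ys s := by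
        apply Nat.div_le_of_le_mul
        rw [mul_comm]; omega
      calc (x / a) ^ Q ≤ (Ys s) ^ Q := Nat.pow_le_pow_left hb Q
        _ ≤ Ts s := by
          unfold Ys Ts
          rw [← pow_mul]
          apply Nat.pow_le_pow_right (by norm_num)
          have h99 : 2 ^ (99 * s) * 2 ^ s = 2 ^ (100 * s) := by rw [← pow_add]; congr 1; ring
          rw [← h99]
          have := hgrow s (by omega) (hcube s (by omega))
          calc 5000 * s * 2 ^ (99 * s) * Q = 2 ^ (99 * s) * (5000 * s * Q) := by ring
            _ ≤ _ := Nat.mul_le_mul_left _ this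
        _ ≤ X := by omega
  have hc : (D.card : ℝ) ≤ D1.card + D2.card := by
    exact_mod_cast (Finset.card_le_card hsub).trans (Finset.card_union_le _ _)
  have c1 := tail_main n s1 X (by omega) ((Nat.lt_two_pow_self (n := n)).le.trans (Nat.pow_le_pow_right (by norm_num) (by omega))) D1 ((Finset.filter_subset _ _).trans hD) (fun x hx => (Finset.mem_filter.1 hx).2)
  have c2 := tail_edge n Q X hn hQ2 hX16 hXQ D2 ((Finset.filter_subset _ _).trans hD) (fun x hx => (Finset.mem_filter.1 hx).2)
  have h5 : (1/2:ℝ) ^ s1 ≤ (1/2) ^ s2 := pow_le_pow_of_le_one (by norm_num) (by norm_num) (by omega)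
  have hXn : (0:ℝ) ≤ X := Nat.cast_nonneg X
  have c1' : (X:ℝ) * (2 * (1 / 2) ^ s1) ≤ X * (ε / 2) := by
    apply mul_le_mul_of_nonneg_left _ hXn
    linarith
  have c2' : (X:ℝ) * (40 * n ^ 2 / Q) ≤ X * (ε / 2) := mul_le_mul_of_nonneg_left hQ3 hXn
  linarith

def cF (F : Finset ℕ) (X : ℕ) : ℕ := ((Finset.Ioc 0 X).filter (fun x => ∀ a ∈ F, ¬ a ∣ x)).card

lemma fin_density (F : Finset ℕ) (hF : ∀ a ∈ F, 0 < a) :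
    ∃ δ : ℝ, Tendsto (fun X : ℕ => (cF F X : ℝ) / X) atTop (nhds δ) := by
  set m := ∏ a ∈ F, a with hm
  have hm0 : 0 < m := Finset.prod_pos hF
  set f : ℕ → ℝ := fun x => if ∀ a ∈ F, ¬ a ∣ (x + 1) then 1 else 0 with hf
  have hper : ∀ a, f (a + m) = f a := by
    intro x
    simp only [hf]
    have : (∀ a ∈ F, ¬ a ∣ (x + m + 1)) ↔ (∀ a ∈ F, ¬ a ∣ (x + 1)) := by
      apply forall₂_congr
      intro a ha
      have h : a ∣ m := Finset.dvd_prod_of_mem _ ha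
      rw [show x + m + 1 = (x + 1) + m by ring, Nat.dvd_add_left h]
    simp only [this]
  have hc : ∀ X, (cF F X : ℝ) = ∑ x ∈ Finset.range X, f x := by
    intro X
    simp only [hf, cF]
    rw [Finset.sum_boole]
    congr 1
    apply Finset.card_bij (fun x _ => x - 1)
    · intro x hx
      obtain ⟨h1, h2⟩ := Finset.mem_filter.1 hx
      obtain ⟨h3, h4⟩ := Finset.mem_Ioc.1 h1
      rw [Finset.mem_filter, Finset.mem_range, Nat.sub_add_cancel h3]
      exact ⟨by omega, h2⟩
    · intro x hx y hy h
      have h3 := (Finset.mem_Ioc.1 (Finset.mem_filter.1 hx).1).1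
      have h4 := (Finset.mem_Ioc.1 (Finset.mem_filter.1 hy).1).1
      omega
    · intro y hy
      obtain ⟨h1, h2⟩ := Finset.mem_filter.1 hy
      have := Finset.mem_range.1 h1
      exact ⟨y + 1, Finset.mem_filter.2 ⟨Finset.mem_Ioc.2 ⟨by omega, by omega⟩, h2⟩, by simp⟩
  refine ⟨(∑ a ∈ Finset.range m, f a) / m, ?_⟩
  have hb := periodic_sum f m hm0 hper (fun a => by simp only [hf]; split_ifs <;> norm_num) (fun a => by simp only [hf]; split_ifs <;> norm_num)
  rw [tendsto_iff_norm_sub_tendsto_zero]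
  have h0 : Tendsto (fun X : ℕ => (m:ℝ) / X) atTop (nhds 0) := tendsto_const_div_atTop_nhds_zero_nat _
  refine squeeze_zero' (Eventually.of_forall (fun _ => norm_nonneg _)) ?_ h0
  filter_upwards [eventually_gt_atTop 0] with X hX
  have hX' : (0:ℝ) < X := by exact_mod_cast hX
  rw [hc, Real.norm_eq_abs, le_div_iff₀ hX']
  calc _ = |(∑ x ∈ Finset.range X, f x) / X - (∑ a ∈ Finset.range m, f a) / m| * |(X:ℝ)| := by rw [abs_of_pos hX']
    _ = |∑ x ∈ Finset.range X, f x - X * ((∑ a ∈ Finset.range m, f a) / m)| := by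
      rw [← abs_mul]; congr 1; field_simp
    _ ≤ m := hb X

lemma prime_step (F : Finset ℕ) (p : ℕ) (hp : 0 < p) (δ δ' : ℝ)
    (h : Tendsto (fun X : ℕ => (cF F X : ℝ) / X) atTop (nhds δ))
    (h' : Tendsto (fun X : ℕ => (cF (insert p F) X : ℝ) / X) atTop (nhds δ')) :
    (1 - 1 / (p:ℝ)) * δ ≤ δ' := by
  have hp' : (0:ℝ) < p := by exact_mod_cast hp
  have hpM : Tendsto (fun M : ℕ => p * M) atTop atTop := tendsto_id.const_mul_atTop' hp
  have t1 := h.comp hpM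
  have t2 := h'.comp hpM
  have t3 : Tendsto (fun M : ℕ => (cF F (p * M) : ℝ) / (p * M : ℕ) - (1 / p) * ((cF F M : ℝ) / M)) atTop (nhds (δ - 1 / p * δ)) :=
    t1.sub (h.const_mul _)
  rw [show (1 - 1 / (p:ℝ)) * δ = δ - 1 / p * δ by ring]
  refine le_of_tendsto_of_tendsto t3 t2 ?_
  filter_upwards [eventually_gt_atTop 0] with M hM
  have hM' : (0:ℝ) < M := by exact_mod_cast hM
  have key : cF F (p * M) ≤ cF (insert p F) (p * M) + cF F M := by
    unfold cF
    have hsub : (Finset.Ioc 0 (p * M)).filter (fun x => ∀ a ∈ F, ¬ a ∣ x) ⊆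
        (Finset.Ioc 0 (p * M)).filter (fun x => ∀ a ∈ insert p F, ¬ a ∣ x) ∪
        ((Finset.Ioc 0 M).filter (fun x => ∀ a ∈ F, ¬ a ∣ x)).image (p * ·) := by
      intro x hx
      obtain ⟨h1, h2⟩ := Finset.mem_filter.1 hx
      obtain ⟨h3, h4⟩ := Finset.mem_Ioc.1 h1
      rw [Finset.mem_union]
      by_cases hpx : p ∣ x
      · right
        obtain ⟨y, rfl⟩ := hpx
        refine Finset.mem_image.2 ⟨y, Finset.mem_filter.2 ⟨Finset.mem_Ioc.2 ⟨Nat.pos_of_mul_pos_left h3, Nat.le_of_mul_le_mul_left h4 hp⟩, ?_⟩, rfl⟩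
        intro a ha hay
        exact h2 a ha (hay.mul_left p)
      · left
        refine Finset.mem_filter.2 ⟨h1, ?_⟩
        intro a ha
        rcases Finset.mem_insert.1 ha with rfl | ha
        · exact hpx
        · exact h2 a ha
    refine (Finset.card_le_card hsub).trans ((Finset.card_union_le _ _).trans ?_)
    exact Nat.add_le_add_left Finset.card_image_le _
  have key' : (cF F (p * M) : ℝ) ≤ cF (insert p F) (p * M) + cF F M := by exact_mod_cast key
  simp only [Function.comp]
  push_cast
  rw [show (cF F (p * M) : ℝ) / (p * M) - 1 / p * (cF F M / M) = (cF F (p * M) - cF F M) / (p * M) by field_simp]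
  gcongr
  linarith

lemma primes_step (F : Finset ℕ) (hF : ∀ a ∈ F, 0 < a) (S : Finset ℕ) (hS : ∀ p ∈ S, p.Prime) (δ δ' : ℝ)
    (h : Tendsto (fun X : ℕ => (cF F X : ℝ) / X) atTop (nhds δ))
    (h' : Tendsto (fun X : ℕ => (cF (S ∪ F) X : ℝ) / X) atTop (nhds δ')) :
    (∏ p ∈ S, (1 - 1 / (p:ℝ))) * δ ≤ δ' := by
  induction S using Finset.induction_on generalizing δ' with
  | empty =>
    simp only [Finset.empty_union] at h'
    rw [Finset.prod_empty, one_mul, tendsto_nhds_unique h h']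
  | insert p S hp ih =>
    have hS' : ∀ q ∈ S, q.Prime := fun q hq => hS q (Finset.mem_insert_of_mem hq)
    have hpp := hS p (Finset.mem_insert_self _ _)
    obtain ⟨δ1, h1⟩ := fin_density (S ∪ F) (by
      intro a ha
      rcases Finset.mem_union.1 ha with ha | ha
      · exact (hS' a ha).pos
      · exact hF a ha)
    have i1 := ih hS' δ1 h1
    rw [Finset.insert_union] at h'
    have i2 := prime_step (S ∪ F) p hpp.pos δ1 δ' h1 h'
    rw [Finset.prod_insert hp, mul_assoc]
    refine le_trans ?_ i2
    apply mul_le_mul_of_nonneg_left i1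
    have : (1:ℝ) ≤ p := by exact_mod_cast hpp.one_le
    rw [sub_nonneg, div_le_one (by linarith)]
    exact this

lemma cF_le (F : Finset ℕ) (X : ℕ) : cF F X ≤ X := by
  unfold cF
  refine (Finset.card_filter_le _ _).trans ?_
  simp

lemma high_density (n s0 : ℕ) (hs : 200 ≤ s0) (hn : n ≤ 2 ^ s0) (G : Finset ℕ) (hG : ∀ a ∈ G, BB n a ∧ Ts s0 ≤ a)
    (δ : ℝ) (h : Tendsto (fun X : ℕ => (cF G X : ℝ) / X) atTop (nhds δ)) : 1 / 2 ≤ δ := by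
  classical
  refine ge_of_tendsto h ?_
  set Z := ∑ a ∈ G, Ys a * a with hZ
  filter_upwards [eventually_ge_atTop (Z + 1)] with X hX
  have hX' : (0:ℝ) < X := by exact_mod_cast (by omega : 0 < X)
  rw [le_div_iff₀ hX']
  set D := (Finset.Ioc 0 X).filter (fun x => ¬ ∀ a ∈ G, ¬ a ∣ x) with hD
  have hc : cF G X + D.card = X := by
    unfold cF
    rw [hD, Finset.card_filter_add_card_filter_not]; simp
  have hb := tail_main n s0 X hs hn D (Finset.filter_subset _ _) (by
    intro x hx
    obtain ⟨hx1, hx2⟩ := Finset.mem_filter.1 hx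
    push Not at hx2
    obtain ⟨a, ha, hax⟩ := hx2
    obtain ⟨hB, hT⟩ := hG a ha
    obtain ⟨s, h1, h2, h3⟩ := Ts_find s0 a hT
    refine ⟨s, a, hB, h1, h2, h3, hax, ?_⟩
    have h4 : Ys a * a ≤ Z := Finset.single_le_sum (f := fun a => Ys a * a) (fun _ _ => Nat.zero_le _) ha
    have h5 : Ys s ≤ Ys a := by
      unfold Ys
      have : s ≤ a := (lt_Ts s).le.trans h2
      apply Nat.pow_le_pow_right (by norm_num)
      gcongr
      norm_num
    have := Nat.mul_le_mul_right a h5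
    omega)
  have hc' : (cF G X : ℝ) + D.card = X := by exact_mod_cast hc
  have h6 : (1/2:ℝ) ^ s0 ≤ (1/2) ^ 2 := pow_le_pow_of_le_one (by norm_num) (by norm_num) (by omega)
  have : (X:ℝ) * (2 * (1/2) ^ s0) ≤ X * (1/2) := by
    apply mul_le_mul_of_nonneg_left _ hX'.le
    linarith
  linarith

lemma fin_lower (n s0 : ℕ) (hs : 200 ≤ s0) (hn : n ≤ 2 ^ s0) (F : Finset ℕ) (hF : ∀ a ∈ F, BB n a ∧ 2 ≤ a)
    (δ : ℝ) (h : Tendsto (fun X : ℕ => (cF F X : ℝ) / X) atTop (nhds δ)) :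
    exp (-(5 + 400 * s0 * log 2)) * (1/2) ≤ δ := by
  set G := F.filter (fun a => Ts s0 ≤ a) with hG
  set S := (Ts s0).primesBelow with hS
  have hSp : ∀ p ∈ S, p.Prime := fun p hp => Nat.prime_of_mem_primesBelow hp
  have hGp : ∀ a ∈ G, 0 < a := by
    intro a ha
    have := (hF a (Finset.mem_filter.1 ha).1).2
    omega
  obtain ⟨δ1, h1⟩ := fin_density G hGp
  obtain ⟨δ2, h2⟩ := fin_density (S ∪ G) (by
    intro a ha
    rcases Finset.mem_union.1 ha with ha | ha
    · exact (hSp a ha).pos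
    · exact hGp a ha)
  have i1 := high_density n s0 hs hn G (fun a ha => ⟨(hF a (Finset.mem_filter.1 ha).1).1, (Finset.mem_filter.1 ha).2⟩) δ1 h1
  have i2 := primes_step G hGp S hSp δ1 δ2 h1 h2
  have i3 : δ2 ≤ δ := by
    refine le_of_tendsto_of_tendsto h2 h (Eventually.of_forall ?_)
    intro X
    simp only
    gcongr
    unfold cF
    apply Finset.card_le_card
    intro x hx
    obtain ⟨hx1, hx2⟩ := Finset.mem_filter.1 hx
    refine Finset.mem_filter.2 ⟨hx1, ?_⟩
    intro a ha hax
    by_cases hT : Ts s0 ≤ a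
    · exact hx2 a (Finset.mem_union_right _ (Finset.mem_filter.2 ⟨ha, hT⟩)) hax
    · have ha2 := (hF a ha).2
      refine hx2 a.minFac (Finset.mem_union_left _ ?_) ((Nat.minFac_dvd a).trans hax)
      rw [hS, Nat.mem_primesBelow]
      have := Nat.minFac_le (n := a) (by omega)
      exact ⟨by omega, Nat.minFac_prime (by omega)⟩
  have i4 := prod_primes_lower (Ts s0)
  have i5 : Hp (Ts s0) ≤ 4 + 400 * s0 * log 2 := by
    have := Hp_upper (2 ^ (100 * s0)) Nat.one_le_two_pow
    push_cast at this
    rw [log_pow] at this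
    push_cast at this
    unfold Ts
    linarith
  have i6 : exp (-(5 + 400 * s0 * log 2)) ≤ ∏ p ∈ S, (1 - 1 / (p:ℝ)) := by
    refine le_trans (exp_le_exp.2 ?_) i4
    linarith
  calc exp (-(5 + 400 * s0 * log 2)) * (1/2) ≤ (∏ p ∈ S, (1 - 1 / (p:ℝ))) * δ1 := by
        apply mul_le_mul i6 i1 (by norm_num) ((exp_pos _).le.trans i6)
    _ ≤ δ2 := i2
    _ ≤ δ := i3

open Classical in
noncomputable def nmf (A : ℕ → Prop) (X : ℕ) : ℕ := ((Finset.Ioc 0 X).filter (fun x => ∀ a, A a → ¬ a ∣ x)).card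

open Classical in
lemma full_density (n s0 : ℕ) (hn1 : 1 ≤ n) (hs : 200 ≤ s0) (hn : n ≤ 2 ^ s0) (A : ℕ → Prop) (hA : ∀ a, A a → BB n a ∧ 2 ≤ a) :
    ∃ δ : ℝ, exp (-(5 + 400 * s0 * log 2)) * (1/2) ≤ δ ∧ Tendsto (fun X : ℕ => (nmf A X : ℝ) / X) atTop (nhds δ) := by
  set F : ℕ → Finset ℕ := fun t => (Finset.range t).filter A with hF
  have hFA : ∀ t, ∀ a ∈ F t, BB n a ∧ 2 ≤ a := fun t a ha => hA a (Finset.mem_filter.1 ha).2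
  have hex : ∀ t, ∃ δ : ℝ, Tendsto (fun X : ℕ => (cF (F t) X : ℝ) / X) atTop (nhds δ) := fun t =>
    fin_density (F t) (fun a ha => by have := (hFA t a ha).2; omega)
  choose δt hδt using hex
  have hlow : ∀ t, exp (-(5 + 400 * s0 * log 2)) * (1/2) ≤ δt t := fun t => fin_lower n s0 hs hn (F t) (hFA t) _ (hδt t)
  have hanti : Antitone δt := by
    intro t t' htt
    refine le_of_tendsto_of_tendsto (hδt t') (hδt t) (Eventually.of_forall ?_)
    intro X
    simp only
    gcongr
    unfold cF
    apply Finset.card_le_card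
    intro x hx
    obtain ⟨hx1, hx2⟩ := Finset.mem_filter.1 hx
    refine Finset.mem_filter.2 ⟨hx1, ?_⟩
    intro a ha
    obtain ⟨h1, h2⟩ := Finset.mem_filter.1 ha
    exact hx2 a (Finset.mem_filter.2 ⟨Finset.mem_range.2 (lt_of_lt_of_le (Finset.mem_range.1 h1) htt), h2⟩)
  have hbdd : BddBelow (Set.range δt) := ⟨_, by rintro _ ⟨t, rfl⟩; exact hlow t⟩
  have hlim := tendsto_atTop_ciInf hanti hbdd
  set δ := ⨅ t, δt t with hδ
  refine ⟨δ, le_ciInf hlow, ?_⟩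
  rw [Metric.tendsto_atTop]
  intro ε hε
  obtain ⟨t0, X0, htail⟩ := tail n hn1 (ε / 4) (by linarith)
  obtain ⟨t1, ht1⟩ := (Metric.tendsto_atTop.1 hlim) (ε / 4) (by linarith)
  set t := max t0 t1 with ht
  have hdt := ht1 t (le_max_right _ _)
  obtain ⟨X1, hX1⟩ := (Metric.tendsto_atTop.1 (hδt t)) (ε / 4) (by linarith)
  refine ⟨max (max X0 X1) 1, ?_⟩
  intro X hX
  have hXX0 : X0 ≤ X := (le_max_left _ _).trans ((le_max_left _ _).trans hX)
  have hXX1 : X1 ≤ X := (le_max_right _ _).trans ((le_max_left _ _).trans hX)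
  have hX0 : (0:ℝ) < X := by
    have : 1 ≤ X := (le_max_right _ _).trans hX
    exact_mod_cast this
  have hd := hX1 X hXX1
  have hle : nmf A X ≤ cF (F t) X := by
    unfold nmf cF
    apply Finset.card_le_card
    intro x hx
    obtain ⟨hx1, hx2⟩ := Finset.mem_filter.1 hx
    exact Finset.mem_filter.2 ⟨hx1, fun a ha => hx2 a (Finset.mem_filter.1 ha).2⟩
  have hge : cF (F t) X ≤ nmf A X + ((Finset.Ioc 0 X).filter (fun x => ∃ a, BB n a ∧ t0 ≤ a ∧ a ∣ x)).card := by
    unfold nmf cF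
    refine le_trans (Finset.card_le_card ?_) (Finset.card_union_le _ _)
    intro x hx
    obtain ⟨hx1, hx2⟩ := Finset.mem_filter.1 hx
    rw [Finset.mem_union]
    by_cases hall : ∀ a, A a → ¬ a ∣ x
    · left; exact Finset.mem_filter.2 ⟨hx1, hall⟩
    · right
      push Not at hall
      obtain ⟨a, ha, hax⟩ := hall
      refine Finset.mem_filter.2 ⟨hx1, a, (hA a ha).1, ?_, hax⟩
      by_contra hlt
      refine hx2 a (Finset.mem_filter.2 ⟨Finset.mem_range.2 ?_, ha⟩) hax
      exact lt_of_lt_of_le (not_le.1 hlt) (le_max_left _ _)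
  have htl := htail X hXX0 _ (Finset.filter_subset _ _) (fun x hx => (Finset.mem_filter.1 hx).2)
  have hle' : (nmf A X : ℝ) / X ≤ cF (F t) X / X := by
    gcongr
  have hge' : (cF (F t) X : ℝ) / X ≤ nmf A X / X + ε / 4 := by
    rw [div_add' _ _ _ hX0.ne']
    gcongr
    have : (cF (F t) X : ℝ) ≤ nmf A X + (((Finset.Ioc 0 X).filter (fun x => ∃ a, BB n a ∧ t0 ≤ a ∧ a ∣ x)).card : ℝ) := by exact_mod_cast hge
    linarith
  rw [Real.dist_eq, abs_lt] at hd hdt ⊢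
  constructor <;> linarith [hd.1, hd.2, hdt.1, hdt.2]

def AA (n a : ℕ) : Prop := 2 ≤ a ∧ ∃ d, (d + 1).Prime ∧ a = d / Nat.gcd d n

lemma mem_spd (m d : ℕ) (hm : 0 < m) : d ∈ spd m ↔ d ∣ m ∧ (d + 1).Prime := by
  unfold spd
  rw [Finset.mem_filter, Nat.mem_divisors]
  constructor
  · rintro ⟨⟨h1, _⟩, h2⟩; exact ⟨h1, h2⟩
  · rintro ⟨h1, h2⟩; exact ⟨⟨h1, hm.ne'⟩, h2⟩

lemma AA_BB (n a : ℕ) (hn : 0 < n) (h : AA n a) : BB n a ∧ 2 ≤ a := by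
  obtain ⟨h2, d, hp, ha⟩ := h
  refine ⟨⟨Nat.gcd d n, Nat.gcd_pos_of_pos_right d hn, Nat.gcd_le_right d hn, ?_⟩, h2⟩
  rw [ha, Nat.mul_div_cancel' (Nat.gcd_dvd_left d n)]
  exact hp

lemma class_iff (n m : ℕ) (hn : 0 < n) (hlcm : n = (spd n).lcm id) (hm : 0 < m) :
    spd m = spd n ↔ n ∣ m ∧ ∀ a, AA n a → ¬ a ∣ m / n := by
  constructor
  · intro h
    have hnm : n ∣ m := by
      rw [hlcm, ← h]
      apply Finset.lcm_dvd
      intro d hd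
      exact ((mem_spd m d hm).1 hd).1
    refine ⟨hnm, ?_⟩
    rintro a ⟨h2, d, hp, ha⟩ hdvd
    have hg := Nat.gcd_dvd_left d n
    have h1 : d ∣ m := by
      have := mul_dvd_mul (Nat.gcd_dvd_right d n) hdvd
      rw [ha, Nat.mul_div_cancel' hg, Nat.mul_div_cancel' hnm] at this
      exact this
    have h3 : d ∈ spd n := h ▸ (mem_spd m d hm).2 ⟨h1, hp⟩
    have h4 := ((mem_spd n d hn).1 h3).1
    rw [Nat.gcd_eq_left h4] at ha
    rcases Nat.eq_zero_or_pos d with h0 | h0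
    · rw [h0] at ha; simp at ha; omega
    · rw [Nat.div_self h0] at ha; omega
  · rintro ⟨⟨q, rfl⟩, hA⟩
    rw [Nat.mul_div_cancel_left q hn] at hA
    ext d
    rw [mem_spd _ d hm, mem_spd n d hn]
    constructor
    · rintro ⟨h1, hp⟩
      refine ⟨?_, hp⟩
      by_contra hdn
      have hd0 : 0 < d := by
        rcases Nat.eq_zero_or_pos d with h | h
        · rw [h] at hp; exact absurd hp (by norm_num)
        · exact h
      have hgpos : 0 < Nat.gcd d n := Nat.gcd_pos_of_pos_right d hn
      have hg := Nat.gcd_dvd_left d n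
      have e : Nat.gcd d n * (d / Nat.gcd d n) = d := Nat.mul_div_cancel' hg
      have e2 : Nat.gcd d n * (n / Nat.gcd d n) = n := Nat.mul_div_cancel' (Nat.gcd_dvd_right d n)
      have hcop : Nat.Coprime (d / Nat.gcd d n) (n / Nat.gcd d n) := Nat.coprime_div_gcd_div_gcd hgpos
      refine hA (d / Nat.gcd d n) ⟨?_, d, hp, rfl⟩ ?_
      · by_contra hlt
        generalize d / Nat.gcd d n = y at hlt e
        have hcase : y = 0 ∨ y = 1 := by
          clear * - hlt
          omega
        rcases hcase with h | h
        · rw [h] at e; omega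
        · rw [h, mul_one] at e
          exact hdn (e ▸ Nat.gcd_dvd_right d n)
      · apply hcop.dvd_of_dvd_mul_left
        apply Nat.dvd_of_mul_dvd_mul_left hgpos
        rw [e, ← mul_assoc, e2]
        exact h1
    · rintro ⟨h1, hp⟩
      exact ⟨h1.mul_right q, hp⟩

lemma class_card (n N : ℕ) (hn : 0 < n) (hlcm : n = (spd n).lcm id) :
    ((Finset.Icc 1 N).filter (fun m => spd m = spd n)).card = nmf (AA n) (N / n) := by
  classical
  unfold nmf
  symm
  apply Finset.card_bij (fun q _ => n * q)
  · intro q hq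
    obtain ⟨h1, h2⟩ := Finset.mem_filter.1 hq
    obtain ⟨h3, h4⟩ := Finset.mem_Ioc.1 h1
    have hpos : 0 < n * q := Nat.mul_pos hn h3
    rw [Finset.mem_filter, Finset.mem_Icc, class_iff n _ hn hlcm hpos, Nat.mul_div_cancel_left q hn]
    refine ⟨⟨hpos, ?_⟩, Dvd.intro q rfl, h2⟩
    rw [mul_comm]
    exact (Nat.le_div_iff_mul_le hn).1 h4
  · intro x _ y _ h
    exact Nat.eq_of_mul_eq_mul_left hn h
  · intro m hm
    obtain ⟨h1, h2⟩ := Finset.mem_filter.1 hm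
    obtain ⟨h3, h4⟩ := Finset.mem_Icc.1 h1
    obtain ⟨h5, h6⟩ := (class_iff n m hn hlcm h3).1 h2
    refine ⟨m / n, Finset.mem_filter.2 ⟨Finset.mem_Ioc.2 ⟨Nat.div_pos (Nat.le_of_dvd h3 h5) hn, Nat.div_le_div_right h4⟩, ?_⟩, Nat.mul_div_cancel' h5⟩
    exact h6

lemma class_limit (n : ℕ) (hn : 0 < n) (f : ℕ → ℝ) (δ : ℝ)
    (h : Tendsto (fun X : ℕ => f X / X) atTop (nhds δ)) :
    Tendsto (fun x : ℝ => f (⌊x⌋₊ / n) / x) atTop (nhds (δ / n)) := by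
  have hn' : (0:ℝ) < n := by exact_mod_cast hn
  have t1 : Tendsto (fun x : ℝ => ⌊(1 / (n:ℝ)) * x⌋₊) atTop atTop :=
    tendsto_nat_floor_atTop.comp (tendsto_id.const_mul_atTop (by positivity))
  have t2 := h.comp t1
  have t3 := tendsto_nat_floor_mul_div_atTop (R := ℝ) (a := 1 / (n:ℝ)) (by positivity)
  have t4 := t2.mul t3
  rw [show δ / n = δ * (1 / n) by ring]
  refine t4.congr' ?_
  filter_upwards [t1.eventually (eventually_gt_atTop 0)] with x hx
  simp only [Function.comp]
  have e : ⌊x⌋₊ / n = ⌊(1 / (n:ℝ)) * x⌋₊ := by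
    rw [one_div_mul_eq_div, Nat.floor_div_natCast]
  rw [e]
  have hx' : ((⌊(1 / (n:ℝ)) * x⌋₊ : ℕ) : ℝ) ≠ 0 := by exact_mod_cast hx.ne'
  rw [div_mul_div_cancel₀ hx']

theorem class_density_lower_bound :
    ∃ C : ℝ, C > 0 ∧ ∀ n : ℕ, 0 < n → 2 ∣ n →
      n = (spd n).lcm id →
      ∃ δ : ℝ,
        Tendsto (fun x : ℝ =>
            (((Finset.Icc 1 ⌊x⌋₊).filter (fun m => spd m = spd n)).card : ℝ) / x)
          atTop (nhds δ) ∧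
        δ ≥ 1 / (n : ℝ) ^ (C * (n.divisors.card : ℝ)) := by
  refine ⟨100000, by norm_num, ?_⟩
  intro n hn h2n hlcm
  set s0 := 201 + Nat.log 2 n with hs0
  have hns : n ≤ 2 ^ s0 := by
    have h1 : n < 2 ^ (Nat.log 2 n + 1) := Nat.lt_pow_succ_log_self (by norm_num) n
    exact h1.le.trans (Nat.pow_le_pow_right (by norm_num) (by omega))
  obtain ⟨δ, hδ, hlim⟩ := full_density n s0 hn (by omega) hns (AA n) (fun a ha => AA_BB n a hn ha)
  refine ⟨δ / n, ?_, ?_⟩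
  · have := class_limit n hn (fun X => (nmf (AA n) X : ℝ)) δ hlim
    refine this.congr ?_
    intro x
    rw [class_card n _ hn hlcm]
  · have hn2 : (2:ℝ) ≤ n := by exact_mod_cast Nat.le_of_dvd hn h2n
    have hn0 : (0:ℝ) < n := by linarith
    have hl2 := log_two_gt_d9
    have hlog : log 2 ≤ log n := log_le_log (by norm_num) hn2
    have hlg : (Nat.log 2 n : ℝ) * log 2 ≤ log n := by
      rw [← log_pow]
      apply log_le_log (by positivity)
      exact_mod_cast Nat.pow_log_le_self 2 hn.ne'
    have hτ : (1:ℝ) ≤ (n.divisors.card : ℝ) := by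
      exact_mod_cast Finset.card_pos.2 ⟨1, Nat.one_mem_divisors.2 hn.ne'⟩
    have e1 : (1:ℝ) / (n:ℝ) ^ (100000 * (n.divisors.card : ℝ)) = exp (-(log n * (100000 * (n.divisors.card : ℝ)))) := by
      rw [rpow_def_of_pos hn0, exp_neg, one_div]
    rw [ge_iff_le, e1]
    have e2 : exp (-(log n * (100000 * (n.divisors.card : ℝ)))) ≤ exp (-(5 + 400 * s0 * log 2) + -log 2 + -log n) := by
      apply exp_le_exp.2
      have h3 : log n * 100000 ≤ log n * (100000 * (n.divisors.card : ℝ)) := by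
        apply mul_le_mul_of_nonneg_left _ (by linarith)
        linarith
      have h4 : (s0:ℝ) * log 2 ≤ 202 * log n := by
        rw [hs0]; push_cast; linarith
      linarith
    refine e2.trans ?_
    rw [exp_add, exp_add, exp_neg (log 2), exp_neg (log n), exp_log (by norm_num), exp_log hn0, ← div_eq_mul_inv _ (n:ℝ)]
    apply div_le_div_of_nonneg_right _ hn0.le
    rw [← one_div]
    exact hδ
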